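/- arXiv:1802.02023 — 3 statements merged into one kernel-verified Lean document; each statement's English description precedes it below -/
import Mathlib

section
/- For every positive rational number r, setting t = e^{−π√r}, the following identity holds: (8√t/π) · [ ∑_{n=0}^∞ σ₃(2n+1) tⁿ/(2n+1)³ + (π√r/2) · ∑_{n=0}^∞ σ₃(2n+1) tⁿ/(2n+1)² ] = (r^{3/2}/π²) · [ (1/16)·S(1,0,r/16;2) − (9/16)·S(1,0,r/4;2) + (1/2)·S(1,0,r;2) ]. (This is the paper's Epstein-zeta evaluation of the level-4 Ramanujan series shifted by 1/2 at q = −e^{−π√r}, with the shifted series replaced by its q-series expression.) -/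
open Real

/-- `σ₃(n)`, the sum of the cubes of the positive divisors of `n`. -/
def sigma3 (n : ℕ) : ℕ := ∑ d ∈ n.divisors, d ^ 3

/-- The Epstein zeta value `S(A,B,C;2) = ∑_{(n,m)≠(0,0)} (An² + Bnm + Cm²)^{−2}`. -/
noncomputable def epstein2 (A B C : ℝ) : ℝ :=
  ∑' p : {p : ℤ × ℤ // p ≠ 0},
    ((A * ((p : ℤ × ℤ).1 : ℝ) ^ 2 + B * ((p : ℤ × ℤ).1 : ℝ) * ((p : ℤ × ℤ).2 : ℝ) +
        C * ((p : ℤ × ℤ).2 : ℝ) ^ 2) ^ 2)⁻¹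

/-!
Write `r = (2y)²`. Sorting `ℤ²` by the parities of both coordinates, the combination of Epstein zeta
values is half of `∑ (-1)ⁿ (n² + y²m²)⁻²` over all `n` and all odd `m`. For fixed `m` the sum over
`n` is, up to a constant, the Fourier side of Poisson summation for the Matérn kernel
`(1 + b|x|) e^{-b|x|}`, `b = 2πy|m|`; the sign `(-1)ⁿ` shifts the lattice on the other side to
`1/2 + ℤ`. So each row becomes a sum of `(1 + πy|m|k) e^{-πy|m|k}` over odd `k`, weighted by
`|m|⁻³`, and collecting the terms with `|m| k = N` produces `∑_{d ∣ N} d⁻³ = σ₃(N) / N³`.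
-/

section Parity

variable {E : Type*} [AddCommGroup E] [UniformSpace E] [IsUniformAddGroup E] [CompleteSpace E]

lemma summable_comp_odd_snd {β : Type*} {f : β × ℤ → E} (hf : Summable f) :
    Summable fun p : β × ℤ => f (p.1, 2 * p.2 + 1) :=
  hf.comp_injective (i := fun p : β × ℤ => (p.1, 2 * p.2 + 1)) fun p q h => by
    simpa [Prod.ext_iff] using h

variable [T2Space E]

lemma tsum_eq_tsum_comp_add_tsum_comp {α β γ : Type*} {f : α → E} (hf : Summable f)
    {g : β → α} {h : γ → α} (hg : g.Injective) (hh : h.Injective)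
    (hgh : IsCompl (Set.range g) (Set.range h)) :
    ∑' a, f a = ∑' b, f (g b) + ∑' c, f (h c) :=
  ((hg.hasSum_range_iff.2 (hf.comp_injective hg).hasSum).add_isCompl hgh
    (hh.hasSum_range_iff.2 (hf.comp_injective hh).hasSum)).tsum_eq

lemma tsum_int_prod_even_add_odd {β : Type*} {f : ℤ × β → E} (hf : Summable f) :
    ∑' p, f p = ∑' p : ℤ × β, f (2 * p.1, p.2) + ∑' p : ℤ × β, f (2 * p.1 + 1, p.2) := by
  refine tsum_eq_tsum_comp_add_tsum_comp hf (fun p q h => ?_) (fun p q h => ?_) ?_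
  · simpa [Prod.ext_iff] using h
  · simpa [Prod.ext_iff] using h
  · convert! Int.isCompl_even_odd.preimage Prod.fst using 1
    · ext p
      simp [Prod.ext_iff, even_iff_exists_two_mul, eq_comm]
    · ext p
      simp [Prod.ext_iff, Odd, eq_comm]

lemma tsum_prod_int_even_add_odd {β : Type*} {f : β × ℤ → E} (hf : Summable f) :
    ∑' p, f p = ∑' p : β × ℤ, f (p.1, 2 * p.2) + ∑' p : β × ℤ, f (p.1, 2 * p.2 + 1) := by
  have h := tsum_int_prod_even_add_odd ((Equiv.prodComm ℤ β).summable_iff.2 hf)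
  simp only [← (Equiv.prodComm ℤ β).tsum_eq (_ : β × ℤ → E)]
  exact h

end Parity

lemma summable_neg_one_zpow_mul {β : Type*} {f : ℤ × β → ℝ} (hf : Summable f) :
    Summable fun p : ℤ × β => (-1) ^ p.1 * f p :=
  .of_norm_bounded hf.norm fun p => by
    rw [norm_mul, norm_zpow, norm_neg, norm_one, one_zpow, one_mul]

lemma tsum_neg_one_zpow_mul {β : Type*} {f : ℤ × β → ℝ} (hf : Summable f) :
    ∑' p : ℤ × β, (-1) ^ p.1 * f p = 2 * ∑' p : ℤ × β, f (2 * p.1, p.2) - ∑' p, f p := by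
  have heven (p : ℤ × β) : (-1 : ℝ) ^ (2 * p.1) = 1 := (even_two_mul p.1).neg_one_zpow
  have hodd (p : ℤ × β) : (-1 : ℝ) ^ (2 * p.1 + 1) = -1 := (odd_two_mul_add_one p.1).neg_one_zpow
  rw [tsum_int_prod_even_add_odd (summable_neg_one_zpow_mul hf), tsum_int_prod_even_add_odd hf]
  simp only [heven, hodd, one_mul, neg_one_mul, tsum_neg]
  ring

lemma tsum_neg_one_zpow_mul_odd_snd {f : ℤ × ℤ → ℝ} (hf : Summable f) :
    ∑' p : ℤ × ℤ, (-1) ^ p.1 * f (p.1, 2 * p.2 + 1) =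
      2 * ∑' p : ℤ × ℤ, f (2 * p.1, p.2) - 2 * ∑' p : ℤ × ℤ, f (2 * p.1, 2 * p.2) -
        ∑' p, f p + ∑' p : ℤ × ℤ, f (p.1, 2 * p.2) := by
  have heven : Summable fun p : ℤ × ℤ => f (2 * p.1, p.2) :=
    hf.comp_injective (i := fun p : ℤ × ℤ => (2 * p.1, p.2)) fun p q h => by
      simpa [Prod.ext_iff] using h
  rw [tsum_neg_one_zpow_mul (summable_comp_odd_snd hf), tsum_prod_int_even_add_odd hf,
    tsum_prod_int_even_add_odd heven]
  ring

/-- The summand `(n² + y²m²)⁻²` of the Epstein zeta value `S(1,0,y²;2)` at `p = (n, m)`. Since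
`0⁻¹ = 0`, the origin contributes `0` and sums may run over all of `ℤ × ℤ`. -/
noncomputable def epsteinSummand (y : ℝ) (p : ℤ × ℤ) : ℝ :=
  (((p.1 : ℝ) ^ 2 + (y * p.2) ^ 2) ^ 2)⁻¹

lemma summable_epsteinSummand {y : ℝ} (hy : 0 < y) : Summable (epsteinSummand y) := by
  have h := EisensteinSeries.summable_norm_eisSummand (k := 4) (by norm_num)
    ⟨y * Complex.I, by simpa⟩
  have hswap : Function.Injective fun p : ℤ × ℤ => ![p.2, p.1] := by
    intro p q hpq
    exact Prod.ext (congrFun hpq 1) (congrFun hpq 0)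
  refine (h.comp_injective hswap).congr fun p => ?_
  have hnorm : ‖(p.2 * (y * Complex.I) + p.1 : ℂ)‖ ^ 2 = (p.1 : ℝ) ^ 2 + (y * p.2) ^ 2 := by
    rw [← Complex.normSq_eq_norm_sq, Complex.normSq_apply]
    simp only [Complex.add_re, Complex.mul_re, Complex.add_im, Complex.mul_im, Complex.intCast_re,
      Complex.intCast_im, Complex.ofReal_re, Complex.ofReal_im, Complex.I_re, Complex.I_im]
    ring
  simp only [Function.comp_apply, EisensteinSeries.eisSummand, epsteinSummand, ← hnorm]
  simp [zpow_neg, ← pow_mul]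

lemma epstein2_one_zero_sq (y : ℝ) : epstein2 1 0 (y ^ 2) = ∑' p, epsteinSummand y p := by
  have hsupp : Function.support (epsteinSummand y) ⊆ {p | p ≠ 0} := by
    rintro p hp rfl
    simp [epsteinSummand] at hp
  rw [epstein2, ← tsum_subtype_eq_of_support_subset hsupp]
  simp only [epsteinSummand, one_mul, zero_mul, add_zero, mul_pow]
  rfl

lemma tsum_neg_one_zpow_mul_epsteinSummand_odd_eq_epstein2 {y : ℝ} (hy : 0 < y) :
    ∑' p : ℤ × ℤ, (-1) ^ p.1 * epsteinSummand y (p.1, 2 * p.2 + 1) =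
      1 / 8 * epstein2 1 0 ((y / 2) ^ 2) - 9 / 8 * epstein2 1 0 (y ^ 2) +
        epstein2 1 0 ((2 * y) ^ 2) := by
  have hfst (p : ℤ × ℤ) :
      epsteinSummand y (2 * p.1, p.2) = 1 / 16 * epsteinSummand (y / 2) p := by
    simp only [epsteinSummand]
    rw [one_div, ← mul_inv]
    push_cast
    ring_nf
  have hboth (p : ℤ × ℤ) :
      epsteinSummand y (2 * p.1, 2 * p.2) = 1 / 16 * epsteinSummand y p := by
    simp only [epsteinSummand]
    rw [one_div, ← mul_inv]
    push_cast
    ring_nf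
  have hsnd (p : ℤ × ℤ) : epsteinSummand y (p.1, 2 * p.2) = epsteinSummand (2 * y) p := by
    simp only [epsteinSummand]
    push_cast
    ring_nf
  rw [tsum_neg_one_zpow_mul_odd_snd (summable_epsteinSummand hy)]
  simp only [hfst, hboth, hsnd, tsum_mul_left, epstein2_one_zero_sq]
  ring

section Divisors

open ArithmeticFunction Asymptotics Filter
open scoped ArithmeticFunction.sigma

lemma sum_divisors_inv_pow {K : Type*} [Field K] [CharZero K] (k n : ℕ) :
    ∑ d ∈ n.divisors, ((d : K) ^ k)⁻¹ = σ k n / (n : K) ^ k := by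
  rw [← Nat.sum_div_divisors n fun d => ((d : K) ^ k)⁻¹, sigma_apply, Nat.cast_sum, Finset.sum_div]
  refine Finset.sum_congr rfl fun d hd => ?_
  have hd0 : (d : K) ≠ 0 := Nat.cast_ne_zero.2 (Nat.pos_of_mem_divisors hd).ne'
  rw [Nat.cast_div (Nat.dvd_of_mem_divisors hd) hd0, div_pow, inv_div, Nat.cast_pow]

lemma sum_divisorsAntidiagonal_div_pow {K : Type*} [Field K] [CharZero K] (g : ℕ → K) (k n : ℕ) :
    ∑ x ∈ n.divisorsAntidiagonal, g (x.1 * x.2) / (x.1 : K) ^ k = σ k n / (n : K) ^ k * g n := by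
  rw [← sum_divisors_inv_pow, Finset.sum_mul,
    ← Nat.sum_divisorsAntidiagonal fun d _ => ((d : K) ^ k)⁻¹ * g n]
  refine Finset.sum_congr rfl fun x hx => ?_
  rw [(Nat.mem_divisorsAntidiagonal.1 hx).1, div_eq_inv_mul]

/-- An odd number together with a factorisation of it is the same as a pair of odd numbers; the odd
numbers `2 * n + 1` are encoded by `n`. -/
def sigmaOddAntidiagonalEquivProd : (Σ n : ℕ, (2 * n + 1).divisorsAntidiagonal) ≃ ℕ × ℕ where
  toFun x := (x.2.1.1 / 2, x.2.1.2 / 2)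
  invFun p := ⟨2 * p.1 * p.2 + p.1 + p.2, (2 * p.1 + 1, 2 * p.2 + 1), by
    rw [Nat.mem_divisorsAntidiagonal]
    exact ⟨by ring, by lia⟩⟩
  left_inv := by
    rintro ⟨n, ⟨d, e⟩, h⟩
    obtain ⟨hde, -⟩ := Nat.mem_divisorsAntidiagonal.1 h
    obtain ⟨⟨a, rfl⟩, ⟨b, rfl⟩⟩ := Nat.odd_mul.1 (hde ▸ odd_two_mul_add_one n)
    obtain rfl : n = 2 * a * b + a + b := by linarith
    have half (c : ℕ) : (2 * c + 1) / 2 = c := by lia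
    ext <;> simp only [half]
  right_inv p := by ext <;> simp only <;> lia

lemma tsum_odd_mul_odd_eq_tsum_sum_divisorsAntidiagonal {E : Type*} [AddCommGroup E]
    [UniformSpace E] [IsUniformAddGroup E] [CompleteSpace E] [T2Space E] {f : ℕ × ℕ → E}
    (hf : Summable fun p : ℕ × ℕ => f (2 * p.1 + 1, 2 * p.2 + 1)) :
    ∑' p : ℕ × ℕ, f (2 * p.1 + 1, 2 * p.2 + 1) =
      ∑' n : ℕ, ∑ x ∈ (2 * n + 1).divisorsAntidiagonal, f x := by
  have hsigma : Summable fun x : Σ n : ℕ, (2 * n + 1).divisorsAntidiagonal => f x.2 :=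
    sigmaOddAntidiagonalEquivProd.symm.summable_iff.1 hf
  calc ∑' p : ℕ × ℕ, f (2 * p.1 + 1, 2 * p.2 + 1)
      = ∑' x : Σ n : ℕ, (2 * n + 1).divisorsAntidiagonal, f x.2 :=
        sigmaOddAntidiagonalEquivProd.symm.tsum_eq fun x => f x.2
    _ = ∑' (n : ℕ) (x : (2 * n + 1).divisorsAntidiagonal), f x := hsigma.tsum_sigma
    _ = ∑' n : ℕ, ∑ x ∈ (2 * n + 1).divisorsAntidiagonal, f x := by
        simp only [Finset.tsum_subtype]

lemma summable_sigma_odd_mul_geometric_div (k j : ℕ) {x : ℝ} (hx : ‖x‖ < 1) :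
    Summable fun n : ℕ => (σ k (2 * n + 1) : ℝ) * x ^ n / (2 * n + 1) ^ j := by
  have hlin : (fun n : ℕ => ((2 * n + 1 : ℕ) : ℝ)) =O[atTop] fun n : ℕ => (n : ℝ) := by
    refine .of_bound 3 ?_
    filter_upwards [eventually_ge_atTop 1] with n hn
    simp only [norm_natCast]
    exact_mod_cast (by lia : 2 * n + 1 ≤ 3 * n)
  have hgeom : Summable fun n : ℕ => ‖(((2 * n + 1) ^ (k + 1) : ℕ) : ℝ) * x ^ n‖ :=
    summable_norm_mul_geometric_of_norm_lt_one hx (by simpa using hlin.pow (k + 1))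
  refine .of_norm_bounded hgeom fun n => ?_
  have hσ : (σ k (2 * n + 1) : ℝ) ≤ ((2 * n + 1) ^ (k + 1) : ℕ) :=
    Nat.cast_le.2 (sigma_le_pow_succ k (2 * n + 1))
  have hpow : (1 : ℝ) ≤ ‖(2 * n + 1 : ℝ) ^ j‖ := by
    exact_mod_cast Nat.one_le_pow j (2 * n + 1) (Nat.succ_pos _)
  rw [norm_div, norm_mul, norm_mul, norm_natCast, norm_natCast]
  exact (div_le_self (by positivity) hpow).trans (by gcongr)

end Divisors

section Poisson

open MeasureTheory Filter Asymptotics FourierTransform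

lemma integrableOn_mul_exp_neg_mul_Ioi {c : ℂ} (hc : 0 < c.re) :
    IntegrableOn (fun x : ℝ => (x : ℂ) * Complex.exp (-c * x)) (Set.Ioi 0) := by
  have h := integrableOn_rpow_mul_exp_neg_mul_rpow (s := 1) (p := 1) (by norm_num) one_pos hc
  refine h.mono' (Continuous.aestronglyMeasurable (by fun_prop)) ?_
  filter_upwards [ae_restrict_mem measurableSet_Ioi] with x hx
  simp [Complex.norm_exp, abs_of_pos hx.out]

lemma integrableOn_one_add_mul_mul_exp_neg_mul_Ioi (b : ℂ) {c : ℂ} (hc : 0 < c.re) :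
    IntegrableOn (fun x : ℝ => (1 + b * x) * Complex.exp (-c * x)) (Set.Ioi 0) := by
  have h := (integrableOn_exp_mul_complex_Ioi (a := -c) (by simpa) 0).add
    ((integrableOn_mul_exp_neg_mul_Ioi hc).const_mul b)
  refine h.congr_fun (fun x _ => ?_) measurableSet_Ioi
  simp only [Pi.add_apply]
  ring

lemma tendsto_pow_mul_exp_neg_mul_atTop (n : ℕ) {c : ℂ} (hc : 0 < c.re) :
    Tendsto (fun x : ℝ => (x : ℂ) ^ n * Complex.exp (-c * x)) atTop (nhds 0) := by
  rw [tendsto_zero_iff_norm_tendsto_zero]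
  refine (tendsto_rpow_mul_exp_neg_mul_atTop_nhds_zero n _ hc).congr' ?_
  filter_upwards [eventually_ge_atTop 0] with x hx
  simp [Complex.norm_exp, abs_of_nonneg hx]

lemma integral_one_add_mul_mul_exp_neg_mul_Ioi (b : ℂ) {c : ℂ} (hc : 0 < c.re) :
    ∫ x : ℝ in Set.Ioi 0, (1 + b * x) * Complex.exp (-c * x) = 1 / c + b / c ^ 2 := by
  have hc0 : c ≠ 0 := by rintro rfl; simp at hc
  have hderiv (x : ℝ) : HasDerivAt
      (fun y : ℝ => (-(1 / c + b / c ^ 2) + -(b / c) * y) * Complex.exp (-c * y))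
      ((1 + b * x) * Complex.exp (-c * x)) x := by
    have hexp : HasDerivAt (fun y : ℂ => Complex.exp (-c * y)) (Complex.exp (-c * x) * -c) x := by
      simpa using ((hasDerivAt_id (x : ℂ)).const_mul (-c)).cexp
    have hlin : HasDerivAt (fun y : ℂ => -(1 / c + b / c ^ 2) + -(b / c) * y) (-(b / c)) x := by
      simpa using ((hasDerivAt_id (x : ℂ)).const_mul (-(b / c))).const_add (-(1 / c + b / c ^ 2))
    convert! (hlin.mul hexp).comp_ofReal using 1
    field_simp
    ring
  have hlim : Tendsto
      (fun y : ℝ => (-(1 / c + b / c ^ 2) + -(b / c) * y) * Complex.exp (-c * y))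
      atTop (nhds 0) := by
    have h := ((tendsto_pow_mul_exp_neg_mul_atTop 0 hc).const_mul (-(1 / c + b / c ^ 2))).add
      ((tendsto_pow_mul_exp_neg_mul_atTop 1 hc).const_mul (-(b / c)))
    simp only [mul_zero, add_zero] at h
    refine h.congr fun y => ?_
    ring
  rw [integral_Ioi_of_hasDerivAt_of_tendsto' (fun x _ => hderiv x)
    (integrableOn_one_add_mul_mul_exp_neg_mul_Ioi b hc) hlim]
  simp

/-- The Matérn kernel of smoothness `3/2` with inverse length scale `b`, whose Fourier transform is
a multiple of `ξ ↦ (b² + (2πξ)²)⁻²`. -/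
noncomputable def maternKernel (b x : ℝ) : ℝ := (1 + b * |x|) * exp (-b * |x|)

variable {b : ℝ}

lemma maternKernel_nonneg (hb : 0 ≤ b) (x : ℝ) : 0 ≤ maternKernel b x := by
  unfold maternKernel
  positivity

lemma maternKernel_neg (x : ℝ) : maternKernel b (-x) = maternKernel b x := by
  simp only [maternKernel, abs_neg]

lemma maternKernel_mul (b : ℝ) {c : ℝ} (hc : 0 ≤ c) (x : ℝ) :
    maternKernel (b * c) x = maternKernel b (c * x) := by
  simp only [maternKernel, abs_mul, abs_of_nonneg hc]
  ring_nf

lemma eqOn_cexp_mul_maternKernel (b ω : ℝ) :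
    Set.EqOn (fun x : ℝ => (1 + (b : ℂ) * x) * Complex.exp (-(b - ω * Complex.I) * x))
      (fun x => Complex.exp (ω * x * Complex.I) * maternKernel b x) (Set.Ioi 0) := by
  intro x hx
  simp only [maternKernel, abs_of_pos hx.out]
  push_cast
  rw [mul_left_comm, ← Complex.exp_add]
  ring_nf

lemma integrableOn_cexp_mul_maternKernel_Ioi (hb : 0 < b) (ω : ℝ) :
    IntegrableOn (fun x : ℝ => Complex.exp (ω * x * Complex.I) * maternKernel b x) (Set.Ioi 0) :=
  (integrableOn_one_add_mul_mul_exp_neg_mul_Ioi b (by simpa)).congr_fun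
    (eqOn_cexp_mul_maternKernel b ω) measurableSet_Ioi

lemma integral_cexp_mul_maternKernel_Ioi (hb : 0 < b) (ω : ℝ) :
    ∫ x : ℝ in Set.Ioi 0, Complex.exp (ω * x * Complex.I) * maternKernel b x =
      1 / (b - ω * Complex.I) + b / (b - ω * Complex.I) ^ 2 := by
  rw [← setIntegral_congr_fun measurableSet_Ioi (eqOn_cexp_mul_maternKernel b ω)]
  exact integral_one_add_mul_mul_exp_neg_mul_Ioi b (by simpa)

lemma integral_cexp_mul_maternKernel (hb : 0 < b) (ω : ℝ) :
    ∫ x : ℝ, Complex.exp (ω * x * Complex.I) * maternKernel b x =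
      ((4 * b ^ 3 / (b ^ 2 + ω ^ 2) ^ 2 : ℝ) : ℂ) := by
  set f : ℝ → ℂ := fun x => Complex.exp (ω * x * Complex.I) * maternKernel b x with hf
  have hf_neg (x : ℝ) :
      f (-x) = Complex.exp ((-ω : ℝ) * x * Complex.I) * maternKernel b x := by
    simp [hf, maternKernel]
  have hf_Ioi : IntegrableOn f (Set.Ioi 0) := integrableOn_cexp_mul_maternKernel_Ioi hb ω
  have hf_Iic : IntegrableOn f (Set.Iic 0) := by
    have h : IntegrableOn (fun x => f (-x)) (Set.Ioi (-0)) := by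
      simpa only [hf_neg, neg_zero] using integrableOn_cexp_mul_maternKernel_Ioi hb (-ω)
    rw [integrableOn_Iic_iff_integrableOn_Iio]
    simpa only [neg_neg] using h.comp_neg_Iio
  have hsub : (b - ω * Complex.I : ℂ) ≠ 0 := fun h => hb.ne' (by simpa using congrArg Complex.re h)
  have hadd : (b + ω * Complex.I : ℂ) ≠ 0 := fun h => hb.ne' (by simpa using congrArg Complex.re h)
  have hprod : (b ^ 2 + ω ^ 2 : ℂ) = (b - ω * Complex.I) * (b + ω * Complex.I) := by
    linear_combination (ω : ℂ) ^ 2 * Complex.I_sq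
  calc ∫ x, f x
      = (∫ x in Set.Ioi 0, f (-x)) + ∫ x in Set.Ioi 0, f x := by
        rw [← intervalIntegral.integral_Iic_add_Ioi hf_Iic hf_Ioi, integral_comp_neg_Ioi, neg_zero]
    _ = (1 / (b + ω * Complex.I) + b / (b + ω * Complex.I) ^ 2) +
          (1 / (b - ω * Complex.I) + b / (b - ω * Complex.I) ^ 2) := by
        simp only [hf_neg]
        simp only [hf, integral_cexp_mul_maternKernel_Ioi hb]
        simp only [Complex.ofReal_neg, neg_mul, sub_neg_eq_add]
    _ = _ := by
        push_cast
        rw [hprod]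
        field_simp
        ring

lemma fourier_maternKernel (hb : 0 < b) (ξ : ℝ) :
    𝓕 (fun x => (maternKernel b x : ℂ)) ξ =
      ((4 * b ^ 3 / (b ^ 2 + (2 * π * ξ) ^ 2) ^ 2 : ℝ) : ℂ) := by
  rw [← neg_sq (2 * π * ξ), ← integral_cexp_mul_maternKernel hb, fourier_real_eq_integral_exp_smul]
  refine integral_congr_ae (.of_forall fun x => ?_)
  simp only [smul_eq_mul]
  push_cast
  ring_nf

lemma continuous_maternKernel : Continuous (maternKernel b) := by
  unfold maternKernel
  fun_prop

lemma isBigO_maternKernel_cocompact (hb : 0 < b) (s : ℝ) :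
    (fun x => (maternKernel b x : ℂ)) =O[cocompact ℝ] fun x => |x| ^ s := by
  have hexp := isLittleO_exp_neg_mul_rpow_atTop hb
  have hlin : (fun x : ℝ => x * exp (-b * x)) =O[atTop] fun x : ℝ => x ^ s := by
    refine ((isBigO_refl (fun x : ℝ => x) atTop).mul (hexp (s - 1)).isBigO).congr' .rfl ?_
    filter_upwards [eventually_gt_atTop 0] with x hx
    rw [rpow_sub_one hx.ne', mul_div_cancel₀ _ hx.ne']
  have h := ((hexp s).isBigO.add (hlin.const_mul_left b)).comp_tendsto
    (tendsto_norm_cocompact_atTop (E := ℝ))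
  refine .of_norm_left (h.norm_left.congr_left fun x => ?_)
  simp only [Function.comp_apply, maternKernel, Complex.norm_real, Real.norm_eq_abs]
  ring_nf

lemma summable_maternKernel_natCast (hb : 0 < b) : Summable fun k : ℕ => maternKernel b k := by
  refine ((summable_pow_mul_exp_neg_nat_mul 0 hb).add
    ((summable_pow_mul_exp_neg_nat_mul 1 hb).mul_left b)).congr fun k => ?_
  simp only [maternKernel, Nat.abs_cast]
  ring

lemma summable_maternKernel_odd (hb : 0 < b) :
    Summable fun k : ℕ => maternKernel b (2 * k + 1) := by
  have hinj : Function.Injective fun k : ℕ => 2 * k + 1 := fun m n h => by simpa using h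
  simpa [Function.comp_def] using (summable_maternKernel_natCast hb).comp_injective hinj

lemma tsum_int_eq_two_mul_tsum_nat {R : Type*} [NonAssocRing R] [TopologicalSpace R]
    [IsTopologicalAddGroup R] [T2Space R] {f : ℤ → R} (hf : Summable fun n : ℕ => f n)
    (hsymm : ∀ n, f (-(n + 1)) = f n) : ∑' n, f n = 2 * ∑' n : ℕ, f n := by
  rw [tsum_of_nat_of_neg_add_one hf (by simpa only [hsymm] using hf), two_mul]
  simp only [hsymm]

lemma fourier_two_inv (n : ℤ) : fourier n ((2⁻¹ : ℝ) : UnitAddCircle) = (-1 : ℂ) ^ n := by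
  rw [fourier_coe_apply, ← Complex.exp_pi_mul_I, ← Complex.exp_int_mul]
  push_cast
  ring_nf

lemma fourier_maternKernel_two_pi_mul {a : ℝ} (ha : 0 < a) (n : ℤ) :
    𝓕 (fun x => (maternKernel (2 * π * a) x : ℂ)) n =
      ((2 * a ^ 3 / π * epsteinSummand a (n, 1) : ℝ) : ℂ) := by
  rw [fourier_maternKernel (by positivity)]
  congr 1
  simp only [epsteinSummand, Int.cast_one, mul_one]
  have hne : (n : ℝ) ^ 2 + a ^ 2 ≠ 0 := by positivity
  field_simp
  ring

lemma tsum_neg_one_zpow_mul_epsteinSummand_one {a : ℝ} (ha : 0 < a) :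
    ∑' n : ℤ, (-1) ^ n * epsteinSummand a (n, 1) =
      π / a ^ 3 * ∑' k : ℕ, maternKernel (π * a) (2 * k + 1) := by
  have hrow : Summable fun n : ℤ => epsteinSummand a (n, 1) :=
    (summable_epsteinSummand ha).comp_injective (Prod.mk_left_injective 1)
  have hcoeff : Summable fun n : ℤ => 𝓕 (fun x => (maternKernel (2 * π * a) x : ℂ)) n := by
    simpa only [fourier_maternKernel_two_pi_mul ha, Complex.summable_ofReal] using hrow.mul_left _
  have hscale (x : ℝ) : maternKernel (2 * π * a) (2⁻¹ + x) = maternKernel (π * a) (2 * x + 1) := by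
    rw [mul_assoc, mul_comm, maternKernel_mul _ zero_le_two]
    ring_nf
  have hpoisson : ∑' n : ℤ, maternKernel (π * a) (2 * n + 1) =
      ∑' n : ℤ, 2 * a ^ 3 / π * ((-1) ^ n * epsteinSummand a (n, 1)) := by
    have h := tsum_eq_tsum_fourier_of_rpow_decay_of_summable
      (Complex.continuous_ofReal.comp continuous_maternKernel) one_lt_two
      (isBigO_maternKernel_cocompact (by positivity) _) hcoeff 2⁻¹
    simp only [Function.comp_def] at h
    simp only [hscale, fourier_two_inv, fourier_maternKernel_two_pi_mul ha] at h
    refine Complex.ofReal_injective ?_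
    push_cast [Complex.ofReal_tsum] at h ⊢
    refine h.trans (tsum_congr fun n => ?_)
    ring
  have hfold : ∑' n : ℤ, maternKernel (π * a) (2 * n + 1) =
      2 * ∑' k : ℕ, maternKernel (π * a) (2 * k + 1) := by
    refine tsum_int_eq_two_mul_tsum_nat (summable_maternKernel_odd (by positivity)) fun n => ?_
    rw [← maternKernel_neg]
    push_cast
    ring_nf
  rw [hfold, tsum_mul_left] at hpoisson
  field_simp at hpoisson ⊢
  linear_combination -hpoisson

end Poisson

section OddLattice

open scoped ArithmeticFunction.sigma

variable {y : ℝ}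

lemma tsum_neg_one_zpow_mul_epsteinSummand_odd_row (hy : 0 < y) (m : ℕ) :
    ∑' n : ℤ, (-1) ^ n * epsteinSummand y (n, 2 * m + 1) =
      π / y ^ 3 * ∑' k : ℕ, maternKernel (π * y) ((2 * m + 1) * (2 * k + 1)) / (2 * m + 1) ^ 3 := by
  have hrow (n : ℤ) :
      epsteinSummand y (n, 2 * m + 1) = epsteinSummand (y * (2 * m + 1)) (n, 1) := by
    simp [epsteinSummand]
  have hm : (0 : ℝ) < 2 * m + 1 := by positivity
  simp only [hrow, tsum_neg_one_zpow_mul_epsteinSummand_one (mul_pos hy hm), ← mul_assoc π y,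
    maternKernel_mul _ hm.le, tsum_div_const]
  field_simp

lemma summable_neg_one_zpow_mul_epsteinSummand_odd (hy : 0 < y) :
    Summable fun p : ℤ × ℤ => (-1) ^ p.1 * epsteinSummand y (p.1, 2 * p.2 + 1) :=
  summable_neg_one_zpow_mul (summable_comp_odd_snd (summable_epsteinSummand hy))

lemma summable_tsum_neg_one_zpow_mul_epsteinSummand_odd_row (hy : 0 < y) :
    Summable fun m : ℕ => ∑' n : ℤ, (-1) ^ n * epsteinSummand y (n, 2 * m + 1) :=
  (summable_neg_one_zpow_mul_epsteinSummand_odd hy).prod_symm.prod.comp_injective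
    Nat.cast_injective

lemma tsum_neg_one_zpow_mul_epsteinSummand_odd_eq_two_mul (hy : 0 < y) :
    ∑' p : ℤ × ℤ, (-1) ^ p.1 * epsteinSummand y (p.1, 2 * p.2 + 1) =
      2 * ∑' (m : ℕ) (n : ℤ), (-1) ^ n * epsteinSummand y (n, 2 * m + 1) := by
  have hsum := (summable_neg_one_zpow_mul_epsteinSummand_odd hy).prod_symm
  rw [← (Equiv.prodComm ℤ ℤ).tsum_eq]
  refine hsum.tsum_prod.trans ?_
  refine tsum_int_eq_two_mul_tsum_nat
    (summable_tsum_neg_one_zpow_mul_epsteinSummand_odd_row hy) fun m => tsum_congr fun n => ?_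
  simp only [epsteinSummand, Prod.swap]
  push_cast
  ring_nf

lemma summable_maternKernel_odd_mul_odd (hy : 0 < y) : Summable fun p : ℕ × ℕ =>
    maternKernel (π * y) ((2 * p.1 + 1) * (2 * p.2 + 1)) / (2 * p.1 + 1) ^ 3 := by
  refine (summable_prod_of_nonneg fun p => ?_).2 ⟨fun m => ?_, ?_⟩
  · exact div_nonneg (maternKernel_nonneg (by positivity) _) (by positivity)
  · have hm : (0 : ℝ) < 2 * m + 1 := by positivity
    simp only [← maternKernel_mul _ hm.le]
    exact (summable_maternKernel_odd (by positivity)).div_const _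
  · have h := summable_tsum_neg_one_zpow_mul_epsteinSummand_odd_row hy
    simp only [tsum_neg_one_zpow_mul_epsteinSummand_odd_row hy] at h
    exact (summable_mul_left_iff (by positivity)).1 h

lemma tsum_neg_one_zpow_mul_epsteinSummand_odd_eq_tsum_sigma (hy : 0 < y) :
    ∑' p : ℤ × ℤ, (-1) ^ p.1 * epsteinSummand y (p.1, 2 * p.2 + 1) =
      2 * π / y ^ 3 *
        ∑' n : ℕ, (σ 3 (2 * n + 1) : ℝ) / (2 * n + 1) ^ 3 * maternKernel (π * y) (2 * n + 1) := by
  have hsum := summable_maternKernel_odd_mul_odd hy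
  have hregroup := tsum_odd_mul_odd_eq_tsum_sum_divisorsAntidiagonal
    (f := fun x => maternKernel (π * y) ((x.1 * x.2 : ℕ) : ℝ) / (x.1 : ℝ) ^ 3) (by simpa using hsum)
  simp only [sum_divisorsAntidiagonal_div_pow fun n : ℕ => maternKernel (π * y) n] at hregroup
  push_cast at hregroup
  rw [tsum_neg_one_zpow_mul_epsteinSummand_odd_eq_two_mul hy]
  simp only [tsum_neg_one_zpow_mul_epsteinSummand_odd_row hy]
  rw [tsum_mul_left, ← hsum.tsum_prod, hregroup]
  ring

lemma tsum_sigma_odd_mul_maternKernel (k j : ℕ) {b : ℝ} (hb : 0 < b) :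
    ∑' n : ℕ, (σ k (2 * n + 1) : ℝ) / (2 * n + 1) ^ (j + 1) * maternKernel b (2 * n + 1) =
      exp (-b) * (∑' n : ℕ, (σ k (2 * n + 1) : ℝ) * exp (-2 * b) ^ n / (2 * n + 1) ^ (j + 1) +
        b * ∑' n : ℕ, (σ k (2 * n + 1) : ℝ) * exp (-2 * b) ^ n / (2 * n + 1) ^ j) := by
  have hnorm : ‖exp (-2 * b)‖ < 1 := by
    rw [norm_of_nonneg (exp_pos _).le, exp_lt_one_iff]
    linarith
  have hexp (n : ℕ) : exp (-b * (2 * n + 1)) = exp (-b) * exp (-2 * b) ^ n := by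
    rw [← exp_nat_mul, ← exp_add]
    ring_nf
  have hterm (n : ℕ) :
      (σ k (2 * n + 1) : ℝ) / (2 * n + 1) ^ (j + 1) * maternKernel b (2 * n + 1) =
        exp (-b) * ((σ k (2 * n + 1) : ℝ) * exp (-2 * b) ^ n / (2 * n + 1) ^ (j + 1) +
          b * ((σ k (2 * n + 1) : ℝ) * exp (-2 * b) ^ n / (2 * n + 1) ^ j)) := by
    have hn : (0 : ℝ) < 2 * n + 1 := by positivity
    rw [maternKernel, abs_of_pos hn, hexp]
    field_simp
    ring
  simp only [hterm]
  rw [tsum_mul_left, Summable.tsum_add (summable_sigma_odd_mul_geometric_div k (j + 1) hnorm)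
    ((summable_sigma_odd_mul_geometric_div k j hnorm).mul_left b), tsum_mul_left]

end OddLattice

theorem stmt_6_general (r : ℝ) (hr : 0 < r) :
    (8 * Real.sqrt (Real.exp (-π * Real.sqrt r)) / π) *
      ((∑' n : ℕ, (sigma3 (2 * n + 1) : ℝ) * Real.exp (-π * Real.sqrt r) ^ n /
          (2 * (n : ℝ) + 1) ^ 3) +
        (π * Real.sqrt r / 2) *
          ∑' n : ℕ, (sigma3 (2 * n + 1) : ℝ) * Real.exp (-π * Real.sqrt r) ^ n /
            (2 * (n : ℝ) + 1) ^ 2) =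
      (r ^ ((3 : ℝ) / 2) / π ^ 2) *
        ((1 / 16) * epstein2 1 0 (r / 16) - (9 / 16) * epstein2 1 0 (r / 4) +
          (1 / 2) * epstein2 1 0 r) := by
  obtain ⟨y, hy, rfl⟩ : ∃ y : ℝ, 0 < y ∧ r = (2 * y) ^ 2 :=
    ⟨√r / 2, by positivity, by rw [mul_div_cancel₀ _ two_ne_zero, sq_sqrt hr.le]⟩
  have h2y : 0 ≤ 2 * y := by positivity
  have hsqrt : √((2 * y) ^ 2) = 2 * y := sqrt_sq h2y
  have hexp : -π * (2 * y) = -2 * (π * y) := by ring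
  have hexp_half : √(exp (-2 * (π * y))) = exp (-(π * y)) := by
    rw [← exp_half]
    ring_nf
  have hpow : ((2 * y) ^ 2) ^ ((3 : ℝ) / 2) = 8 * y ^ 3 := by
    rw [← rpow_natCast_mul h2y]
    norm_num [mul_pow]
  have hseries := tsum_sigma_odd_mul_maternKernel 3 2 (mul_pos pi_pos hy)
  have hlattice := tsum_neg_one_zpow_mul_epsteinSummand_odd_eq_epstein2 hy
  rw [tsum_neg_one_zpow_mul_epsteinSummand_odd_eq_tsum_sigma hy, hseries] at hlattice
  rw [hsqrt, hexp, hexp_half, hpow, show (2 * y) ^ 2 / 16 = (y / 2) ^ 2 by ring,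
    show (2 * y) ^ 2 / 4 = y ^ 2 by ring]
  simp only [sigma3, ← ArithmeticFunction.sigma_apply]
  field_simp at hlattice ⊢
  linear_combination 2 * hlattice

theorem stmt_6 (r : ℚ) (hr : 0 < r) :
    (8 * Real.sqrt (Real.exp (-π * Real.sqrt (r : ℝ))) / π) *
      ((∑' n : ℕ, (sigma3 (2 * n + 1) : ℝ) * Real.exp (-π * Real.sqrt (r : ℝ)) ^ n /
          (2 * (n : ℝ) + 1) ^ 3) +
        (π * Real.sqrt (r : ℝ) / 2) *
          ∑' n : ℕ, (sigma3 (2 * n + 1) : ℝ) * Real.exp (-π * Real.sqrt (r : ℝ)) ^ n /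
            (2 * (n : ℝ) + 1) ^ 2) =
      ((r : ℝ) ^ ((3 : ℝ) / 2) / π ^ 2) *
        ((1 / 16) * epstein2 1 0 ((r : ℝ) / 16) - (9 / 16) * epstein2 1 0 ((r : ℝ) / 4) +
          (1 / 2) * epstein2 1 0 (r : ℝ)) :=
  stmt_6_general r (by exact_mod_cast hr)
end

section
/- ∑_{n=0}^∞ (−1)ⁿ · ((1)_n)³/((3/2)_n)³ · (2 + 3n)/8ⁿ = 2G, where G is Catalan's constant. -/
open Real

/-- Catalan's constant `G = ∑_{n=0}^∞ (−1)ⁿ/(2n+1)²`. -/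
noncomputable def catalanConst : ℝ := ∑' n : ℕ, (-1 : ℝ) ^ n / (2 * (n : ℝ) + 1) ^ 2

/-!
A Wilf–Zeilberger pair is a pair of double sequences with
`F (n + 1) k - F n k = G n (k + 1) - G n k`; summing over the whole quadrant gives
`∑ₖ F 0 k = ∑ₙ G n 0` when the terms at infinity vanish. Two such pairs evaluate two families of
hypergeometric series, for positive `b` and `a`:

* `∑ₖ (b)ₖ (b + 1/2)ₖ / (b + 1)ₖ²` as a series in `n` with ratio tending to `-1/8`;
* `∑ₖ (a)ₖ k! / (a + 1)ₖ²` as `2 a² ∑ₙ (-1)ⁿ / (n + a)²`.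

At `a = b = 1/2` the two series in `k` agree, which equates the two series in `n`.
-/

open Filter Finset Polynomial Topology
open scoped Nat

local notation "poch[" x "," n "]" => Polynomial.eval x (ascPochhammer _ n)

section Pochhammer

theorem ascPochhammer_eval_add_one_mul {R : Type*} [CommSemiring R] (x : R) (n : ℕ) :
    poch[x + 1, n] * x = poch[x, n] * (x + n) := by
  rw [← ascPochhammer_succ_eval, ascPochhammer_succ_left]
  simp [mul_comm]

theorem ascPochhammer_eval_eq_prod_range {R : Type*} [CommSemiring R] (x : R) (n : ℕ) :
    poch[x, n] = ∏ j ∈ range n, (x + j) := by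
  induction n with
  | zero => simp
  | succ n ih => rw [ascPochhammer_succ_eval, prod_range_succ, ih]

theorem ascPochhammer_eval_le_eval {R : Type*} [CommSemiring R] [PartialOrder R]
    [IsOrderedRing R] {x y : R} (hx : 0 ≤ x) (hxy : x ≤ y) (n : ℕ) :
    poch[x, n] ≤ poch[y, n] := by
  rw [ascPochhammer_eval_eq_prod_range, ascPochhammer_eval_eq_prod_range]
  exact prod_le_prod (fun j _ ↦ by positivity) fun j _ ↦ by gcongr

theorem ascPochhammer_eval_two_mul {K : Type*} [Field K] [CharZero K] (x : K) (n : ℕ) :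
    poch[2 * x, 2 * n] = 4 ^ n * poch[x, n] * poch[x + 1 / 2, n] := by
  induction n with
  | zero => simp
  | succ n ih =>
    rw [mul_add_one, ← add_assoc (2 * n) 1 1]
    simp only [ascPochhammer_succ_eval, ih]
    push_cast
    field_simp
    ring

/-- Euler's limit for the Gamma function: `(x)ₙ₊₁` grows like `nˣ n! / Γ(x)`. -/
theorem tendsto_ascPochhammer_eval_div {a c : ℝ} (ha : 0 < a) (hac : a < c) :
    Tendsto (fun n : ℕ ↦ poch[a, n] / poch[c, n]) atTop (𝓝 0) := by
  rw [← tendsto_add_atTop_iff_nat 1]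
  have hpow : Tendsto (fun n : ℕ ↦ (n : ℝ) ^ (-(c - a))) atTop (𝓝 0) :=
    (tendsto_rpow_neg_atTop (sub_pos.2 hac)).comp tendsto_natCast_atTop_atTop
  have hGamma := (GammaSeq_tendsto_Gamma c).div (GammaSeq_tendsto_Gamma a) (Gamma_pos_of_pos ha).ne'
  have hlim := hpow.mul hGamma
  rw [zero_mul] at hlim
  refine hlim.congr' ?_
  filter_upwards [eventually_gt_atTop 0] with n hn
  have hn' : (0 : ℝ) < n := by exact_mod_cast hn
  have ha' := (ascPochhammer_pos (n + 1) a ha).ne'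
  have hc' := (ascPochhammer_pos (n + 1) c (ha.trans hac)).ne'
  simp only [Pi.div_apply, GammaSeq, ← ascPochhammer_eval_eq_prod_range]
  rw [neg_sub, rpow_sub hn']
  field_simp

end Pochhammer

section WilfZeilberger

theorem tendsto_sum_range_of_wz {E : Type*} [AddCommGroup E] [TopologicalSpace E]
    [IsTopologicalAddGroup E] [T2Space E] {F G : ℕ → ℕ → E}
    (hwz : ∀ n k, F (n + 1) k - F n k = G n (k + 1) - G n k)
    (hF : ∀ k, Tendsto (F · k) atTop (𝓝 0)) (hG : ∀ k, Summable (G · k))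
    (hGlim : Tendsto (fun k ↦ ∑' n, G n k) atTop (𝓝 0)) :
    Tendsto (fun K ↦ ∑ k ∈ range K, F 0 k) atTop (𝓝 (∑' n, G n 0)) := by
  have hcolumn (k : ℕ) : F 0 k = ∑' n, G n k - ∑' n, G n (k + 1) := by
    have hsum := ((hG (k + 1)).sub (hG k)).hasSum.tendsto_sum_nat
    rw [(hG (k + 1)).tsum_sub (hG k)] at hsum
    simp only [← hwz, sum_range_sub (F · k)] at hsum
    have hdiff := tendsto_nhds_unique hsum ((hF k).sub_const (F 0 k))
    rw [← neg_sub, hdiff, zero_sub, neg_neg]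
  simp only [hcolumn, sum_range_sub' (fun k ↦ ∑' n, G n k)]
  simpa only [sub_zero] using hGlim.const_sub (∑' n, G n 0)

theorem hasSum_of_wz_of_le {F G : ℕ → ℕ → ℝ} {c b : ℕ → ℝ}
    (hwz : ∀ n k, F (n + 1) k - F n k = G n (k + 1) - G n k)
    (hF_nonneg : ∀ k, 0 ≤ F 0 k) (hFG : ∀ n k, |F n k| ≤ |G n k|)
    (hG : ∀ n k, |G n k| ≤ c k * b n) (hb : Summable b) (hc : Tendsto c atTop (𝓝 0)) :
    HasSum (F 0) (∑' n, G n 0) := by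
  have hG_summable (k : ℕ) : Summable (G · k) :=
    (hb.mul_left (c k)).of_norm_bounded fun n ↦ hG n k
  rw [hasSum_iff_tendsto_nat_of_nonneg hF_nonneg]
  refine tendsto_sum_range_of_wz hwz (fun k ↦ ?_) hG_summable ?_
  · exact squeeze_zero_norm (hFG · k) (by simpa using (hG_summable k).tendsto_atTop_zero.abs)
  · refine squeeze_zero_norm (a := fun k ↦ c k * ∑' n, b n) (fun k ↦ ?_)
      (by simpa using hc.mul_const (∑' n, b n))
    exact tsum_of_norm_bounded (hb.hasSum.mul_left (c k)) fun n ↦ hG n k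

end WilfZeilberger

section Acceleration

/-- The hypergeometric term shared by the Wilf–Zeilberger pair
`F n k = accelTerm b n k * (2 n + 1)`, `G n k = accelTerm b n k * (3 n + 2 k + 2 b + 1)`,
which turns `∑ₖ (b)ₖ (b + 1/2)ₖ / (b + 1)ₖ²` into a geometrically convergent series. -/
noncomputable def accelTerm (b : ℝ) (n k : ℕ) : ℝ :=
  (-1 / 8) ^ n * (1 / 4) ^ k * (n ! : ℝ) ^ 2 * poch[2 * b, 2 * k + n] /
    (poch[3 / 2, n] * poch[b + 1, n + k] ^ 2)

variable {b : ℝ}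

theorem accelTerm_zero_left (b : ℝ) (k : ℕ) :
    accelTerm b 0 k = poch[b, k] * poch[b + 1 / 2, k] / poch[b + 1, k] ^ 2 := by
  simp only [accelTerm, add_zero, zero_add, ascPochhammer_eval_two_mul, ascPochhammer_zero,
    eval_one, Nat.factorial_zero, Nat.cast_one, pow_zero, one_pow, one_mul, one_div, inv_pow]
  rw [mul_one, mul_assoc (4 ^ k), inv_mul_cancel_left₀ (by positivity)]

theorem accelTerm_zero_left_pos (hb : 0 < b) (k : ℕ) : 0 < accelTerm b 0 k := by
  have h₁ := ascPochhammer_pos k b hb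
  have h₂ := ascPochhammer_pos k (b + 1 / 2) (by positivity)
  have h₃ := ascPochhammer_pos k (b + 1) (by positivity)
  rw [accelTerm_zero_left]
  positivity

theorem accelTerm_succ_left (hb : 0 < b) (n k : ℕ) :
    accelTerm b (n + 1) k = accelTerm b n k *
      (-(n + 1) ^ 2 * (2 * b + 2 * k + n) / (8 * (n + 3 / 2) * (n + k + b + 1) ^ 2)) := by
  have h₁ : (0 : ℝ) < poch[3 / 2, n] := ascPochhammer_pos n _ (by norm_num)
  have h₂ : 0 < poch[b + 1, n + k] := ascPochhammer_pos _ _ (by positivity)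
  rw [accelTerm, accelTerm, add_right_comm n 1 k, ← add_assoc (2 * k) n 1]
  simp only [ascPochhammer_succ_eval, Nat.factorial_succ]
  push_cast
  field_simp
  ring

theorem accelTerm_succ_right (hb : 0 < b) (n k : ℕ) :
    accelTerm b n (k + 1) = accelTerm b n k *
      ((2 * b + 2 * k + n) * (2 * b + 2 * k + n + 1) / (4 * (n + k + b + 1) ^ 2)) := by
  have h₁ : (0 : ℝ) < poch[3 / 2, n] := ascPochhammer_pos n _ (by norm_num)
  have h₂ : 0 < poch[b + 1, n + k] := ascPochhammer_pos _ _ (by positivity)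
  rw [accelTerm, accelTerm, ← add_assoc n k 1, show 2 * (k + 1) + n = 2 * k + n + 1 + 1 by ring]
  simp only [ascPochhammer_succ_eval]
  push_cast
  field_simp
  ring

theorem accelTerm_wz (hb : 0 < b) (n k : ℕ) :
    accelTerm b (n + 1) k * (2 * (n + 1 : ℕ) + 1) - accelTerm b n k * (2 * n + 1) =
      accelTerm b n (k + 1) * (3 * n + 2 * (k + 1 : ℕ) + 2 * b + 1) -
        accelTerm b n k * (3 * n + 2 * k + 2 * b + 1) := by
  rw [accelTerm_succ_left hb, accelTerm_succ_right hb]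
  push_cast
  field_simp
  ring

theorem abs_accelTerm_succ_left_mul_le (hb : 0 < b) (n k : ℕ) :
    |accelTerm b (n + 1) k| * (3 * (n + 1 : ℕ) + 2 * k + 2 * b + 1) ≤
      |accelTerm b n k| * (3 * n + 2 * k + 2 * b + 1) * (1 / 2) := by
  have hratio : (n + 1 : ℝ) ^ 2 * (2 * b + 2 * k + n) / (8 * (n + 3 / 2) * (n + k + b + 1) ^ 2) *
      (3 * (n + 1 : ℕ) + 2 * k + 2 * b + 1) ≤ (3 * n + 2 * k + 2 * b + 1) * (1 / 2) := by
    rw [div_mul_eq_mul_div, div_le_iff₀ (by positivity)]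
    push_cast
    calc (n + 1 : ℝ) ^ 2 * (2 * b + 2 * k + n) * (3 * (n + 1) + 2 * k + 2 * b + 1)
        = (n + 1) * (n + 1) * (2 * b + 2 * k + n) * (3 * (n + 1) + 2 * k + 2 * b + 1) := by ring
      _ ≤ (n + 3 / 2) * (n + k + b + 1) * (3 * n + 2 * k + 2 * b + 1) *
          (4 * (n + k + b + 1)) := by
        gcongr ?_ * ?_ * ?_ * ?_ <;> linarith [n.cast_nonneg (α := ℝ), k.cast_nonneg (α := ℝ)]
      _ = (3 * n + 2 * k + 2 * b + 1) * (1 / 2) *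
          (8 * (n + 3 / 2) * (n + k + b + 1) ^ 2) := by ring
  rw [accelTerm_succ_left hb, abs_mul, neg_mul, neg_div, abs_neg,
    abs_of_nonneg (a := _ / _) (by positivity), mul_assoc, mul_assoc |accelTerm b n k|]
  gcongr

theorem abs_accelTerm_mul_le (hb : 0 < b) (n k : ℕ) :
    |accelTerm b n k| * (3 * n + 2 * k + 2 * b + 1) ≤
      accelTerm b 0 k * (2 * k + 2 * b + 1) * (1 / 2) ^ n := by
  induction n with
  | zero => simp [abs_of_pos (accelTerm_zero_left_pos hb k)]
  | succ n ih =>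
    calc _ ≤ _ := abs_accelTerm_succ_left_mul_le hb n k
      _ ≤ accelTerm b 0 k * (2 * k + 2 * b + 1) * (1 / 2) ^ n * (1 / 2) := by gcongr
      _ = _ := by rw [mul_assoc, ← pow_succ]

theorem tendsto_accelTerm_zero_left_mul (hb : 0 < b) :
    Tendsto (fun k : ℕ ↦ accelTerm b 0 k * (2 * k + 2 * b + 1)) atTop (𝓝 0) := by
  have hlim : Tendsto (fun k ↦ (2 * b + 1) * (poch[b + 1 / 2, k] / poch[b + 1, k]))
      atTop (𝓝 0) := by
    simpa only [mul_zero] using (tendsto_ascPochhammer_eval_div (a := b + 1 / 2) (c := b + 1)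
      (by positivity) (by linarith)).const_mul (2 * b + 1)
  refine squeeze_zero (fun k ↦ ?_) (fun k ↦ ?_) hlim
  · have := accelTerm_zero_left_pos hb k
    positivity
  · have h₁ := ascPochhammer_pos k (b + 1 / 2) (by positivity)
    have h₂ := ascPochhammer_pos k (b + 1) (by positivity)
    have hshift : poch[b, k] = poch[b + 1, k] * b / (b + k) :=
      eq_div_of_mul_eq (by positivity) (ascPochhammer_eval_add_one_mul b k).symm
    have hfactor : b * (2 * k + 2 * b + 1) / (b + k) ≤ 2 * b + 1 := by
      rw [div_le_iff₀ (by positivity)]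
      nlinarith [k.cast_nonneg (α := ℝ)]
    calc accelTerm b 0 k * (2 * k + 2 * b + 1)
        = b * (2 * k + 2 * b + 1) / (b + k) * (poch[b + 1 / 2, k] / poch[b + 1, k]) := by
          rw [accelTerm_zero_left, hshift]
          field_simp
      _ ≤ (2 * b + 1) * (poch[b + 1 / 2, k] / poch[b + 1, k]) := by gcongr

theorem hasSum_ascPochhammer_mul_ascPochhammer_add_half_div (hb : 0 < b) :
    HasSum (fun k ↦ poch[b, k] * poch[b + 1 / 2, k] / poch[b + 1, k] ^ 2)
      (∑' n : ℕ, (-1 / 8) ^ n * (n ! : ℝ) ^ 2 * poch[2 * b, n] * (3 * n + 2 * b + 1) /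
        (poch[3 / 2, n] * poch[b + 1, n] ^ 2)) := by
  have hsum := hasSum_of_wz_of_le (F := fun n k ↦ accelTerm b n k * (2 * n + 1))
    (G := fun n k ↦ accelTerm b n k * (3 * n + 2 * k + 2 * b + 1)) (b := fun n ↦ (1 / 2) ^ n)
    (accelTerm_wz hb)
    (fun k ↦ by have := accelTerm_zero_left_pos hb k; positivity)
    (fun n k ↦ by
      rw [abs_mul, abs_mul, abs_of_nonneg (a := 2 * (n : ℝ) + 1) (by positivity),
        abs_of_nonneg (a := 3 * (n : ℝ) + 2 * k + 2 * b + 1) (by positivity)]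
      gcongr |accelTerm b n k| * ?_
      linarith [n.cast_nonneg (α := ℝ), k.cast_nonneg (α := ℝ)])
    (fun n k ↦ by
      rw [abs_mul, abs_of_nonneg (a := 3 * (n : ℝ) + 2 * k + 2 * b + 1) (by positivity)]
      exact abs_accelTerm_mul_le hb n k)
    summable_geometric_two (tendsto_accelTerm_zero_left_mul hb)
  convert hsum using 1
  · ext k
    simp [accelTerm_zero_left]
  · refine tsum_congr fun n ↦ ?_
    simp [accelTerm, div_mul_eq_mul_div]

end Acceleration

section Alternating

/-- The hypergeometric term shared by the Wilf–Zeilberger pair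
`F n k = alternatingTerm a n k * (n + a)`, `G n k = alternatingTerm a n k * (2 (n + a) + k)`,
for which `G n 0 = 2 (-1)ⁿ / (n + a)²`. -/
noncomputable def alternatingTerm (a : ℝ) (n k : ℕ) : ℝ :=
  (-1) ^ n * (k ! : ℝ) / ((n + a) ^ 2 * poch[n + a + 1, k] * (n + a + k))

variable {a : ℝ}

theorem alternatingTerm_zero_left_mul (ha : 0 < a) (k : ℕ) :
    a ^ 2 * (alternatingTerm a 0 k * a) = poch[a, k] * k ! / poch[a + 1, k] ^ 2 := by
  have h := ascPochhammer_pos k (a + 1) (by positivity)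
  have hshift : poch[a, k] = poch[a + 1, k] * a / (a + k) :=
    eq_div_of_mul_eq (by positivity) (ascPochhammer_eval_add_one_mul a k).symm
  rw [alternatingTerm, hshift, Nat.cast_zero, zero_add]
  field_simp

theorem alternatingTerm_zero_right (ha : 0 < a) (n : ℕ) :
    alternatingTerm a n 0 * (2 * (n + a)) = 2 * ((-1) ^ n / (n + a) ^ 2) := by
  simp only [alternatingTerm, Nat.factorial_zero, ascPochhammer_zero, eval_one, Nat.cast_zero,
    Nat.cast_one, add_zero]
  field_simp

theorem alternatingTerm_succ_left (ha : 0 < a) (n k : ℕ) :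
    alternatingTerm a (n + 1) k = alternatingTerm a n k *
      (-(n + a) ^ 2 * (n + a + k) / ((n + a + 1) * (n + a + k + 1) ^ 2)) := by
  have h := ascPochhammer_pos k (n + a + 1) (by positivity)
  have hshift : poch[n + a + 1 + 1, k] = poch[n + a + 1, k] * (n + a + 1 + k) / (n + a + 1) :=
    eq_div_of_mul_eq (by positivity) (ascPochhammer_eval_add_one_mul _ k)
  rw [alternatingTerm, alternatingTerm, Nat.cast_add_one, add_right_comm (n : ℝ) 1 a, hshift]
  field_simp
  ring

theorem alternatingTerm_succ_right (ha : 0 < a) (n k : ℕ) :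
    alternatingTerm a n (k + 1) = alternatingTerm a n k *
      ((k + 1) * (n + a + k) / (n + a + k + 1) ^ 2) := by
  have h := ascPochhammer_pos k (n + a + 1) (by positivity)
  rw [alternatingTerm, alternatingTerm, ascPochhammer_succ_eval, Nat.factorial_succ]
  push_cast
  field_simp
  ring

theorem alternatingTerm_wz (ha : 0 < a) (n k : ℕ) :
    alternatingTerm a (n + 1) k * ((n + 1 : ℕ) + a) - alternatingTerm a n k * (n + a) =
      alternatingTerm a n (k + 1) * (2 * (n + a) + (k + 1 : ℕ)) -
        alternatingTerm a n k * (2 * (n + a) + k) := by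
  rw [alternatingTerm_succ_left ha, alternatingTerm_succ_right ha]
  push_cast
  field_simp
  ring

theorem abs_alternatingTerm_mul_le (ha : 0 < a) (n k : ℕ) :
    |alternatingTerm a n k| * (2 * (n + a) + k) ≤
      2 * (k ! / poch[a + 1, k]) * (1 / (n + a) ^ 2) := by
  have ha_pos := ascPochhammer_pos k (a + 1) (by positivity)
  have hna_pos := ascPochhammer_pos k (n + a + 1) (by positivity)
  have hmono : poch[a + 1, k] ≤ poch[n + a + 1, k] :=
    ascPochhammer_eval_le_eval (by positivity) (by linarith [n.cast_nonneg (α := ℝ)]) k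
  have hfactor : (2 * (n + a) + k) / (n + a + k) ≤ 2 := by
    rw [div_le_iff₀ (by positivity)]
    linarith [k.cast_nonneg (α := ℝ)]
  calc |alternatingTerm a n k| * (2 * (n + a) + k)
      = (2 * (n + a) + k) / (n + a + k) * (k ! / poch[n + a + 1, k]) * (1 / (n + a) ^ 2) := by
        rw [alternatingTerm, abs_div, abs_mul, abs_neg_one_pow, one_mul, Nat.abs_cast,
          abs_of_pos (by positivity)]
        field_simp
    _ ≤ 2 * (k ! / poch[a + 1, k]) * (1 / (n + a) ^ 2) := by gcongr

theorem tendsto_factorial_div_ascPochhammer_add_one (ha : 0 < a) :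
    Tendsto (fun k : ℕ ↦ (k ! : ℝ) / poch[a + 1, k]) atTop (𝓝 0) := by
  simpa only [ascPochhammer_eval_one] using
    tendsto_ascPochhammer_eval_div one_pos (lt_add_of_pos_left 1 ha)

theorem summable_one_div_nat_add_sq (a : ℝ) :
    Summable fun n : ℕ ↦ 1 / ((n : ℝ) + a) ^ 2 := by
  refine ((summable_one_div_nat_add_rpow a 2).2 one_lt_two).congr fun n ↦ ?_
  rw [rpow_two, sq_abs]

theorem hasSum_ascPochhammer_mul_factorial_div (ha : 0 < a) :
    HasSum (fun k : ℕ ↦ poch[a, k] * (k ! : ℝ) / poch[a + 1, k] ^ 2)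
      (2 * a ^ 2 * ∑' n : ℕ, (-1) ^ n / (n + a) ^ 2) := by
  have hsum := hasSum_of_wz_of_le (F := fun n k ↦ alternatingTerm a n k * (n + a))
    (G := fun n k ↦ alternatingTerm a n k * (2 * (n + a) + k))
    (alternatingTerm_wz ha)
    (fun k ↦ by
      have := ascPochhammer_pos k ((0 : ℕ) + a + 1) (by positivity)
      simp only [alternatingTerm, pow_zero]
      positivity)
    (fun n k ↦ by
      rw [abs_mul, abs_mul, abs_of_nonneg (a := (n : ℝ) + a) (by positivity),
        abs_of_nonneg (a := 2 * ((n : ℝ) + a) + k) (by positivity)]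
      gcongr |alternatingTerm a n k| * ?_
      linarith [n.cast_nonneg (α := ℝ), k.cast_nonneg (α := ℝ)])
    (fun n k ↦ by
      rw [abs_mul, abs_of_nonneg (a := 2 * ((n : ℝ) + a) + k) (by positivity)]
      exact abs_alternatingTerm_mul_le ha n k)
    (summable_one_div_nat_add_sq a)
    (by simpa only [mul_zero] using (tendsto_factorial_div_ascPochhammer_add_one ha).const_mul 2)
  simp only [Nat.cast_zero, zero_add, add_zero, alternatingTerm_zero_right ha,
    tsum_mul_left] at hsum
  have hscaled := hsum.mul_left (a ^ 2)
  rwa [funext (alternatingTerm_zero_left_mul ha), ← mul_assoc, mul_comm (a ^ 2) 2] at hscaled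

end Alternating

theorem catalanConst_eq_tsum_add_half :
    catalanConst = 1 / 4 * ∑' n : ℕ, (-1 : ℝ) ^ n / (n + 1 / 2) ^ 2 := by
  rw [catalanConst, ← tsum_mul_left]
  refine tsum_congr fun n ↦ ?_
  field_simp
  ring

theorem stmt_8 :
    ∑' n : ℕ, (-1 : ℝ) ^ n *
        ((ascPochhammer ℝ n).eval (1 : ℝ)) ^ 3 / ((ascPochhammer ℝ n).eval (3 / 2 : ℝ)) ^ 3 *
        ((2 + 3 * (n : ℝ)) / (8 : ℝ) ^ n) =
      2 * catalanConst := by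
  have hgeometric := hasSum_ascPochhammer_mul_ascPochhammer_add_half_div one_half_pos (b := 1 / 2)
  have halternating := hasSum_ascPochhammer_mul_factorial_div one_half_pos (a := 1 / 2)
  simp only [add_halves, ascPochhammer_eval_one] at hgeometric
  calc _ = ∑' n : ℕ, (-1 / 8) ^ n * (n ! : ℝ) ^ 2 * poch[2 * (1 / 2), n] *
          (3 * n + 2 * (1 / 2) + 1) / (poch[3 / 2, n] * poch[1 / 2 + 1, n] ^ 2) := by
        refine tsum_congr fun n ↦ ?_
        have h : (0 : ℝ) < poch[3 / 2, n] := ascPochhammer_pos n _ (by norm_num)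
        rw [mul_one_div_cancel two_ne_zero, show (1 / 2 + 1 : ℝ) = 3 / 2 by norm_num,
          ascPochhammer_eval_one, div_pow]
        field_simp
        ring
    _ = 2 * (1 / 2) ^ 2 * ∑' n : ℕ, (-1 : ℝ) ^ n / (n + 1 / 2) ^ 2 :=
        hgeometric.unique halternating
    _ = 2 * catalanConst := by
        rw [catalanConst_eq_tsum_add_half]
        ring
end

section
/- ∑_{n=0}^∞ ((1)_n)³/((3/2)_n)³ · ( (42√5 + 30)/32 · n + (26√5 + 14)/32 ) · (1/2^{6n+3}) · ((√5 − 1)/2)^{8n+4} = π²/240. -/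
open Real

/-!
Put `z = -θ₂⁸ / (4 θ₃⁴ θ₄⁴)`, a modular function with a zero at the cusp `i∞`. Multiplied by a
suitable form of weight `-2`, the series `∑ (1)ₙ³ / (3/2)ₙ³ zⁿ` satisfies an inhomogeneous
third-order equation: its third derivative is, up to a constant, the odd part of the `q`-expansion
of `E₄` at `v / 2`, so it is an iterated integral of an Eisenstein series. By Bol's identity such
an integral transforms under `v ↦ -1 / v` up to a quadratic polynomial, and the relations
`S² = (ST)³ = 1` determine this polynomial except for one coefficient, which is absorbed in the
constant of integration. At `τ₀ = (1 + √-15) / 4` one has `-1 / τ₀ = τ₀ - 1 / 2`, so the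
transformation law and its derivative give a linear relation between the values of the series and
of its derivative at `z (2 τ₀) = ((√5 - 1) / 2) ^ 8 / 64`, with right-hand side a multiple of `π²`.
-/

namespace RamanujanSeries

open Complex Filter Topology Asymptotics ModularForm EisensteinSeries
open UpperHalfPlane hiding I
open scoped Real MatrixGroups ArithmeticFunction.sigma

section PowerSeries

/-- Coefficient sequences of polynomial growth; their power series converge on the unit disc. -/
def HasPolyGrowth (a : ℕ → ℂ) : Prop :=
  ∃ k : ℕ, a =O[atTop] fun n ↦ ((n ^ k : ℕ) : ℂ)

/-- The sum of the power series with coefficients `a`; it is `0` where the series diverges. -/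
noncomputable def powerSum (a : ℕ → ℂ) (z : ℂ) : ℂ := ∑' n, a n * z ^ n

variable {a b : ℕ → ℂ} {z : ℂ}

lemma hasPolyGrowth_of_norm_le {C : ℝ} {k : ℕ} (h : ∀ n, ‖a n‖ ≤ C * (n : ℝ) ^ k) :
    HasPolyGrowth a :=
  ⟨k, .of_bound C (.of_forall fun n ↦ by simpa using h n)⟩

lemma HasPolyGrowth.mul (ha : HasPolyGrowth a) (hb : HasPolyGrowth b) :
    HasPolyGrowth fun n ↦ a n * b n := by
  obtain ⟨k, hk⟩ := ha
  obtain ⟨l, hl⟩ := hb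
  exact ⟨k + l, by simpa only [pow_add, Nat.cast_mul] using hk.mul hl⟩

lemma hasPolyGrowth_natCast : HasPolyGrowth fun n ↦ (n : ℂ) :=
  hasPolyGrowth_of_norm_le (C := 1) (k := 1) fun n ↦ by simp

lemma HasPolyGrowth.summable (ha : HasPolyGrowth a) (hz : ‖z‖ < 1) :
    Summable fun n ↦ a n * z ^ n :=
  let ⟨_, hk⟩ := ha
  (summable_norm_mul_geometric_of_norm_lt_one' hz hk).of_norm

lemma HasPolyGrowth.mul_powerSum_succ (ha : HasPolyGrowth a) (hz : ‖z‖ < 1) :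
    z * powerSum (fun n ↦ (n + 1) * a (n + 1)) z = powerSum (fun n ↦ n * a n) z := by
  rw [powerSum, powerSum, ((hasPolyGrowth_natCast.mul ha).summable hz).tsum_eq_zero_add,
    ← tsum_mul_left]
  simp only [Nat.cast_zero, zero_mul, zero_add, Nat.cast_add, Nat.cast_one]
  exact tsum_congr fun n ↦ by ring

lemma HasPolyGrowth.hasDerivAt_powerSum (ha : HasPolyGrowth a) (hz : ‖z‖ < 1) :
    HasDerivAt (powerSum a) (powerSum (fun n ↦ (n + 1) * a (n + 1)) z) z := by
  obtain ⟨r, hzr, hr⟩ := exists_between hz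
  have hr0 : 0 < r := (norm_nonneg z).trans_lt hzr
  have hbound : Summable fun n ↦ ‖n * a n‖ * r ^ (n - 1) := by
    have hna := (hasPolyGrowth_natCast.mul ha).summable (z := r)
      (by simpa [abs_of_pos hr0] using hr)
    refine (summable_nat_add_iff 1).mp
      ((((summable_nat_add_iff 1).mpr hna).norm.div_const r).congr fun n ↦ ?_)
    rw [Nat.add_sub_cancel, norm_mul, norm_pow, norm_real, Real.norm_of_nonneg hr0.le, pow_succ,
      ← mul_assoc, mul_div_cancel_right₀ _ hr0.ne']
  have hle (n : ℕ) {y : ℂ} (hy : ‖y‖ < r) :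
      ‖a n * (n * y ^ (n - 1))‖ ≤ ‖n * a n‖ * r ^ (n - 1) := by
    rw [← mul_assoc, mul_comm (a n), norm_mul, norm_pow]
    gcongr
  have hderiv : HasDerivAt (powerSum a) (∑' n, a n * (n * z ^ (n - 1))) z :=
    hasDerivAt_tsum_of_isPreconnected hbound Metric.isOpen_ball
      (convex_ball (0 : ℂ) r).isPreconnected (fun n y _ ↦ (hasDerivAt_pow n y).const_mul (a n))
      (fun n y hy ↦ hle n (mem_ball_zero_iff.mp hy)) (Metric.mem_ball_self hr0)
      (ha.summable (by simp)) (mem_ball_zero_iff.mpr hzr)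
  refine hderiv.congr_deriv ?_
  rw [Summable.tsum_eq_zero_add (.of_norm_bounded hbound fun n ↦ hle n hzr), powerSum]
  simp only [Nat.cast_zero, zero_mul, mul_zero, zero_add, Nat.cast_add, Nat.cast_one,
    Nat.add_sub_cancel]
  exact tsum_congr fun n ↦ by ring

lemma powerSum_zero (a : ℕ → ℂ) : powerSum a 0 = a 0 := by
  rw [powerSum, tsum_eq_single 0 fun n hn ↦ by simp [hn]]
  simp

lemma HasPolyGrowth.tendsto_powerSum (ha : HasPolyGrowth a) :
    Tendsto (powerSum a) (𝓝 0) (𝓝 (a 0)) := by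
  simpa only [powerSum_zero] using
    (ha.hasDerivAt_powerSum (z := 0) (by simp)).continuousAt.tendsto

lemma norm_powerSum_le {K : ℝ} (hK : 0 ≤ K) (h0 : a 0 = 0) (ha : ∀ n, ‖a n‖ ≤ K ^ n)
    (hz : K * ‖z‖ < 1) : ‖powerSum a z‖ ≤ K * ‖z‖ / (1 - K * ‖z‖) := by
  have hgeom : HasSum (fun n ↦ (K * ‖z‖) ^ (n + 1)) (K * ‖z‖ / (1 - K * ‖z‖)) := by
    simpa only [pow_succ', div_eq_mul_inv] using
      (hasSum_geometric_of_lt_one (by positivity) hz).mul_left (K * ‖z‖)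
  have hle : ∀ n, ‖a n * z ^ n‖ ≤ (K * ‖z‖) ^ n := fun n ↦ by
    rw [norm_mul, norm_pow, mul_pow]
    gcongr
    exact ha n
  rw [powerSum, Summable.tsum_eq_zero_add
    (.of_norm_bounded (summable_geometric_of_lt_one (by positivity) hz) hle), h0, zero_mul,
    zero_add]
  exact tsum_of_norm_bounded hgeom fun n ↦ hle (n + 1)

end PowerSeries

section QDerivative

/-- `d` is the value at `v` of the normalised derivative `(2πi)⁻¹ df/dv = q df/dq`. -/
def HasQDerivAt (f : ℂ → ℂ) (d v : ℂ) : Prop := HasDerivAt f (2 * π * I * d) v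

variable {f g : ℂ → ℂ} {d e v : ℂ}

namespace HasQDerivAt

lemma differentiableAt (hf : HasQDerivAt f d v) : DifferentiableAt ℂ f v :=
  HasDerivAt.differentiableAt hf

lemma add (hf : HasQDerivAt f d v) (hg : HasQDerivAt g e v) :
    HasQDerivAt (fun v ↦ f v + g v) (d + e) v :=
  (HasDerivAt.add hf hg).congr_deriv (by ring)

lemma const_mul (c : ℂ) (hf : HasQDerivAt f d v) : HasQDerivAt (fun v ↦ c * f v) (c * d) v :=
  (HasDerivAt.const_mul c hf).congr_deriv (by ring)

lemma sub (hf : HasQDerivAt f d v) (hg : HasQDerivAt g e v) :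
    HasQDerivAt (fun v ↦ f v - g v) (d - e) v :=
  (HasDerivAt.sub hf hg).congr_deriv (by ring)

lemma mul (hf : HasQDerivAt f d v) (hg : HasQDerivAt g e v) :
    HasQDerivAt (fun v ↦ f v * g v) (d * g v + f v * e) v :=
  (HasDerivAt.mul hf hg).congr_deriv (by ring)

lemma pow (n : ℕ) (hf : HasQDerivAt f d v) :
    HasQDerivAt (fun v ↦ f v ^ n) (n * f v ^ (n - 1) * d) v :=
  (HasDerivAt.fun_pow hf n).congr_deriv (by ring)

lemma div (hf : HasQDerivAt f d v) (hg : HasQDerivAt g e v) (hv : g v ≠ 0) :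
    HasQDerivAt (fun v ↦ f v / g v) ((d * g v - f v * e) / g v ^ 2) v :=
  (HasDerivAt.div hf hg hv).congr_deriv (by ring)

lemma const_add (c : ℂ) (hf : HasQDerivAt f d v) : HasQDerivAt (fun v ↦ c + f v) d v :=
  HasDerivAt.const_add c hf

lemma comp_const_mul (c : ℂ) (hf : HasQDerivAt f d (c * v)) :
    HasQDerivAt (fun v ↦ f (c * v)) (c * d) v := by
  have hc : HasDerivAt (fun v ↦ c * v) c v := by simpa using (hasDerivAt_id v).const_mul c
  exact (HasDerivAt.comp v hf hc).congr_deriv (by ring)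

lemma comp_add_const (c : ℂ) (hf : HasQDerivAt f d (v + c)) :
    HasQDerivAt (fun v ↦ f (v + c)) d v :=
  HasDerivAt.comp_add_const v c hf

lemma congr_val (hf : HasQDerivAt f d v) (h : d = e) : HasQDerivAt f e v := h ▸ hf

lemma unique (hf : HasQDerivAt f d v) (hg : HasQDerivAt f e v) : d = e :=
  mul_left_cancel₀ two_pi_I_ne_zero (HasDerivAt.unique hf hg)

end HasQDerivAt

lemma eventually_im_gt {c : ℝ} (hv : c < v.im) : ∀ᶠ w in 𝓝 v, c < w.im :=
  Complex.continuous_im.continuousAt.eventually (eventually_gt_nhds hv)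

lemma HasQDerivAt.congr_of_im_gt {c : ℝ} (hf : HasQDerivAt f d v) (hv : c < v.im)
    (h : ∀ w : ℂ, c < w.im → g w = f w) : HasQDerivAt g d v :=
  HasDerivAt.congr_of_eventuallyEq hf ((eventually_im_gt hv).mono h)

/-- The filter of neighbourhoods of the cusp `i∞`. -/
noncomputable abbrev imInfty : Filter ℂ := comap Complex.im atTop

lemma eventually_imInfty_im_gt (c : ℝ) : ∀ᶠ v in imInfty, c < v.im :=
  tendsto_comap.eventually (eventually_gt_atTop c)

lemma tendsto_mul_imInfty {r : ℝ} (hr : 0 < r) :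
    Tendsto (fun v : ℂ ↦ r * v) imInfty imInfty := by
  rw [tendsto_comap_iff]
  simpa [Function.comp_def] using tendsto_comap.const_mul_atTop hr

lemma tendsto_add_real_imInfty (r : ℝ) : Tendsto (fun v : ℂ ↦ v + r) imInfty imInfty := by
  rw [tendsto_comap_iff]
  simpa [Function.comp_def] using tendsto_comap

lemma exists_eq_const_of_hasDerivAt_zero {c : ℝ}
    (hf : ∀ v : ℂ, c < v.im → HasDerivAt f 0 v) : ∃ a, ∀ v : ℂ, c < v.im → f v = a :=
  (isOpen_lt continuous_const Complex.continuous_im).exists_is_const_of_deriv_eq_zero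
    (convex_halfSpace_im_gt c).isPreconnected
    (fun v hv ↦ (hf v hv).differentiableAt.differentiableWithinAt) fun v hv ↦ (hf v hv).deriv

lemma eq_of_hasQDerivAt_of_tendsto {c : ℝ} {d : ℂ → ℂ}
    (hf : ∀ v : ℂ, c < v.im → HasQDerivAt f (d v) v)
    (hg : ∀ v : ℂ, c < v.im → HasQDerivAt g (d v) v)
    (hlim : Tendsto (fun v ↦ f v - g v) imInfty (𝓝 0)) {v : ℂ} (hv : c < v.im) : f v = g v := by
  obtain ⟨a, ha⟩ := exists_eq_const_of_hasDerivAt_zero (f := fun v ↦ f v - g v) fun w hw ↦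
    ((hf w hw).sub (hg w hw)).congr_deriv (by rw [sub_self, mul_zero])
  have hbot : imInfty.NeBot :=
    atTop_neBot.comap_of_surj fun y ↦ ⟨y * I, by simp⟩
  have ha₀ : a = 0 := tendsto_nhds_unique (tendsto_const_nhds.congr'
    ((eventually_imInfty_im_gt c).mono fun w hw ↦ (ha w hw).symm)) hlim
  exact sub_eq_zero.mp ((ha v hv).trans ha₀)

end QDerivative

section QSeries

/-- The `q`-series `∑ a n * q ^ n` with `q = exp (2πiv)`. -/
noncomputable def qSeries (a : ℕ → ℂ) (v : ℂ) : ℂ := powerSum a (Function.Periodic.qParam 1 v)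

variable {a : ℕ → ℂ} {v : ℂ}

lemma qSeries_eq_tsum (a : ℕ → ℂ) (v : ℂ) :
    qSeries a v = ∑' n, a n * cexp (2 * π * I * v) ^ n := by
  simp [qSeries, powerSum, Function.Periodic.qParam]

lemma qSeries_add_one (a : ℕ → ℂ) (v : ℂ) : qSeries a (v + 1) = qSeries a v := by
  simp [qSeries_eq_tsum, mul_add, Complex.exp_add]

lemma HasPolyGrowth.hasQDerivAt_powerSum_comp {f : ℂ → ℂ} {c : ℂ} (ha : HasPolyGrowth a)
    (hfv : ‖f v‖ < 1) (hf : HasQDerivAt f (c * f v) v) :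
    HasQDerivAt (fun v ↦ powerSum a (f v)) (c * powerSum (fun n ↦ n * a n) (f v)) v := by
  rw [← ha.mul_powerSum_succ hfv]
  exact ((ha.hasDerivAt_powerSum hfv).comp v hf).congr_deriv (by ring)

lemma hasQDerivAt_qParam (v : ℂ) :
    HasQDerivAt (Function.Periodic.qParam 1) (1 * Function.Periodic.qParam 1 v) v := by
  have h : HasDerivAt (fun z : ℂ ↦ 2 * π * I * z / (1 : ℝ)) (2 * π * I) v := by
    simpa using (hasDerivAt_id v).const_mul (2 * π * I)
  exact h.cexp.congr_deriv (by rw [Function.Periodic.qParam]; ring)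

lemma HasPolyGrowth.hasQDerivAt_qSeries (ha : HasPolyGrowth a) (hv : 0 < v.im) :
    HasQDerivAt (qSeries a) (qSeries (fun n ↦ n * a n) v) v :=
  (ha.hasQDerivAt_powerSum_comp (Function.Periodic.norm_qParam_lt_one one_pos hv)
    (hasQDerivAt_qParam v)).congr_val (one_mul _)

lemma HasPolyGrowth.tendsto_qSeries (ha : HasPolyGrowth a) :
    Tendsto (qSeries a) imInfty (𝓝 (a 0)) :=
  ha.tendsto_powerSum.comp
    ((Function.Periodic.qParam_tendsto one_pos).mono_right nhdsWithin_le_nhds)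

end QSeries

section LevelOne

lemma ne_zero_of_im_pos {v : ℂ} (hv : 0 < v.im) : v ≠ 0 := by
  rintro rfl
  simp at hv

lemma im_neg_one_div_pos {v : ℂ} (hv : 0 < v.im) : 0 < (-1 / v).im := by
  have h := UpperHalfPlane.im_inv_neg_coe_pos ⟨v, hv⟩
  rwa [inv_neg, ← one_div, ← neg_div] at h

lemma hasDerivAt_neg_one_div {v : ℂ} (hv : v ≠ 0) :
    HasDerivAt (fun w : ℂ ↦ -1 / w) (1 / v ^ 2) v := by
  simpa [div_eq_mul_inv] using (hasDerivAt_inv hv).const_mul (-1)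

/-- `f : ℂ → ℂ` restricts on the upper half-plane to a modular form of weight `k` and level one
with constant term `c`. Values outside the upper half-plane are unconstrained. -/
structure IsLevelOneForm (k : ℕ) (f : ℂ → ℂ) (c : ℂ) : Prop where
  differentiableAt {v : ℂ} : 0 < v.im → DifferentiableAt ℂ f v
  add_one {v : ℂ} : 0 < v.im → f (v + 1) = f v
  neg_one_div {v : ℂ} : 0 < v.im → f (-1 / v) = v ^ k * f v
  tendsto : Tendsto f imInfty (𝓝 c)

namespace IsLevelOneForm

variable {k l : ℕ} {f g : ℂ → ℂ} {c d v : ℂ}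

lemma add (hf : IsLevelOneForm k f c) (hg : IsLevelOneForm k g d) :
    IsLevelOneForm k (fun v ↦ f v + g v) (c + d) where
  differentiableAt hv := (hf.differentiableAt hv).add (hg.differentiableAt hv)
  add_one hv := by rw [hf.add_one hv, hg.add_one hv]
  neg_one_div hv := by rw [hf.neg_one_div hv, hg.neg_one_div hv, mul_add]
  tendsto := hf.tendsto.add hg.tendsto

lemma const_mul (a : ℂ) (hf : IsLevelOneForm k f c) :
    IsLevelOneForm k (fun v ↦ a * f v) (a * c) where
  differentiableAt hv := (hf.differentiableAt hv).const_mul a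
  add_one hv := by rw [hf.add_one hv]
  neg_one_div hv := by rw [hf.neg_one_div hv, mul_left_comm]
  tendsto := hf.tendsto.const_mul a

lemma mul (hf : IsLevelOneForm k f c) (hg : IsLevelOneForm l g d) :
    IsLevelOneForm (k + l) (fun v ↦ f v * g v) (c * d) where
  differentiableAt hv := (hf.differentiableAt hv).mul (hg.differentiableAt hv)
  add_one hv := by rw [hf.add_one hv, hg.add_one hv]
  neg_one_div hv := by rw [hf.neg_one_div hv, hg.neg_one_div hv]; ring
  tendsto := hf.tendsto.mul hg.tendsto

lemma slash_T (hf : IsLevelOneForm k f c) :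
    (fun z : ℍ ↦ f z) ∣[(k : ℤ)] ModularGroup.T = fun z : ℍ ↦ f z := by
  ext z
  rw [SL_slash_apply, ModularGroup.denom_apply, modular_T_smul, ModularGroup.T]
  simp [← hf.add_one z.2, add_comm]

lemma slash_S (hf : IsLevelOneForm k f c) :
    (fun z : ℍ ↦ f z) ∣[(k : ℤ)] ModularGroup.S = fun z : ℍ ↦ f z := by
  ext z
  rw [SlashInvariantForm.slash_S_apply]
  simp only [zpow_neg, zpow_natCast]
  rw [inv_neg, ← one_div, ← neg_div, hf.neg_one_div z.2]
  field_simp [z.ne_zero]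

lemma eq_zero_of_weight_lt_twelve (hf : IsLevelOneForm k f 0) (hk : k < 12)
    (hv : 0 < v.im) : f v = 0 := by
  have hslash := SlashInvariantForm.slash_action_generators_SL2Z hf.slash_S hf.slash_T
  let F : CuspForm 𝒮ℒ (k : ℤ) :=
  { toFun := fun z ↦ f z
    slash_action_eq' := by
      rintro _ ⟨γ, rfl⟩
      exact hslash γ
    holo' := by
      rw [UpperHalfPlane.mdifferentiable_iff]
      refine .congr (fun z hz ↦ (hf.differentiableAt hz).differentiableWithinAt) fun z hz ↦ ?_
      simp [ofComplex_apply_of_im_pos hz]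
    zero_at_cusps' := by
      intro c hc
      rw [Subgroup.IsArithmetic.isCusp_iff_isCusp_SL2Z] at hc
      rw [OnePoint.isZeroAt_iff_forall_SL2Z hc]
      intro γ _
      rw [hslash]
      exact hf.tendsto.comp (tendsto_comap_iff.mpr tendsto_comap) }
  have hrank := CuspForm.rank_eq_zero_of_weight_lt_twelve (k := (k : ℤ)) (by exact_mod_cast hk)
  have hF : F = 0 := (rank_zero_iff.mp hrank).elim _ _
  exact congrArg (fun G : CuspForm 𝒮ℒ (k : ℤ) ↦ G ⟨v, hv⟩) hF

lemma eq_of_weight_lt_twelve (hf : IsLevelOneForm k f c) (hg : IsLevelOneForm k g c)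
    (hk : k < 12) (hv : 0 < v.im) : f v = g v := by
  have h : IsLevelOneForm k (fun v ↦ f v + -1 * g v) 0 := by
    simpa using hf.add (hg.const_mul (-1))
  linear_combination h.eq_zero_of_weight_lt_twelve hk hv

end IsLevelOneForm

end LevelOne

section Eisenstein

lemma hasPolyGrowth_sigma (k : ℕ) : HasPolyGrowth fun n ↦ (σ k n : ℂ) :=
  hasPolyGrowth_of_norm_le (C := 1) (k := k + 1) fun n ↦ by
    rw [one_mul, Complex.norm_natCast]
    exact_mod_cast ArithmeticFunction.sigma_le_pow_succ k n

/-- Ramanujan's `P`, the quasimodular Eisenstein series `E₂`, as a `q`-series. -/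
noncomputable def P (v : ℂ) : ℂ := 1 + (-24) * qSeries (fun n ↦ σ 1 n) v

/-- Ramanujan's `Q`, the Eisenstein series `E₄`, as a `q`-series. -/
noncomputable def Q (v : ℂ) : ℂ := 1 + 240 * qSeries (fun n ↦ σ 3 n) v

/-- Ramanujan's `R`, the Eisenstein series `E₆`, as a `q`-series. -/
noncomputable def R (v : ℂ) : ℂ := 1 + (-504) * qSeries (fun n ↦ σ 5 n) v

lemma qSeries_sigma_coe (k : ℕ) (z : ℍ) :
    qSeries (fun n ↦ σ k n) z = ∑' n : ℕ+, (σ k n : ℂ) * cexp (2 * π * I * z) ^ (n : ℕ) := by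
  rw [qSeries_eq_tsum, ← tsum_zero_pnat_eq_tsum_nat]
  · simp
  · simpa [Function.Periodic.qParam] using
      (hasPolyGrowth_sigma k).summable (Function.Periodic.norm_qParam_lt_one one_pos z.2)

lemma P_coe (z : ℍ) : P z = E2 z := by
  rw [P, E2_eq_tsum_cexp, qSeries_sigma_coe]
  ring

lemma Q_coe (z : ℍ) : Q z = E₄ z := by
  have h := q_expansion_bernoulli (k := 4) (by norm_num) (by decide) z
  rw [show bernoulli 4 = -1 / 30 by decide +kernel] at h
  refine Eq.trans ?_ h.symm
  rw [Q, qSeries_sigma_coe]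
  norm_num

lemma R_coe (z : ℍ) : R z = E₆ z := by
  have h := q_expansion_bernoulli (k := 6) (by norm_num) (by decide) z
  rw [show bernoulli 6 = 1 / 42 by decide +kernel] at h
  refine Eq.trans ?_ h.symm
  rw [R, qSeries_sigma_coe]
  norm_num [sub_eq_add_neg]

lemma isLevelOneForm_of_coe_eq {k : ℕ} {a : ℕ → ℂ} {c₀ c₁ : ℂ} (ha : HasPolyGrowth a)
    (F : ModularForm 𝒮ℒ (k : ℤ)) (hF : ∀ z : ℍ, c₀ + c₁ * qSeries a z = F z) :
    IsLevelOneForm k (fun v ↦ c₀ + c₁ * qSeries a v) (c₀ + c₁ * a 0) where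
  differentiableAt hv :=
    ((ha.hasQDerivAt_qSeries hv).differentiableAt.const_mul c₁).const_add c₀
  add_one _ := by rw [qSeries_add_one]
  neg_one_div {v} hv := by
    have h := congrFun (SlashInvariantForm.slash_action_eqn F _
      (⟨ModularGroup.S, rfl⟩ : _ ∈ 𝒮ℒ)) ⟨v, hv⟩
    change ((F : ℍ → ℂ) ∣[(k : ℤ)] ModularGroup.S) _ = _ at h
    rw [SlashInvariantForm.slash_S_apply, ← hF, ← hF, zpow_neg, zpow_natCast,
      mul_inv_eq_iff_eq_mul₀ (pow_ne_zero _ (ne_zero_of_im_pos hv))] at h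
    rw [mul_comm (v ^ k), ← h, neg_div, one_div, ← inv_neg]
  tendsto := (ha.tendsto_qSeries.const_mul c₁).const_add c₀

lemma isLevelOneForm_Q : IsLevelOneForm 4 Q 1 := by
  have h := isLevelOneForm_of_coe_eq (k := 4) (hasPolyGrowth_sigma 3) E₄ Q_coe
  rwa [ArithmeticFunction.map_zero, Nat.cast_zero, mul_zero, add_zero] at h

lemma isLevelOneForm_R : IsLevelOneForm 6 R 1 := by
  have h := isLevelOneForm_of_coe_eq (k := 6) (hasPolyGrowth_sigma 5) E₆ R_coe
  rwa [ArithmeticFunction.map_zero, Nat.cast_zero, mul_zero, add_zero] at h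

variable {v : ℂ}

lemma P_add_one (v : ℂ) : P (v + 1) = P v := by rw [P, P, qSeries_add_one]

lemma tendsto_P : Tendsto P imInfty (𝓝 1) := by
  have h := ((hasPolyGrowth_sigma 1).tendsto_qSeries.const_mul (-24)).const_add 1
  rwa [ArithmeticFunction.map_zero, Nat.cast_zero, mul_zero, add_zero] at h

lemma P_neg_one_div (hv : 0 < v.im) : P (-1 / v) = v ^ 2 * P v + 6 * v / (π * I) := by
  have h := congrFun (E2_slash_action ModularGroup.S) ⟨v, hv⟩
  have hv₀ := ne_zero_of_im_pos hv
  have hπ : (π : ℂ) ≠ 0 := ofReal_ne_zero.mpr pi_ne_zero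
  rw [SlashInvariantForm.slash_S_apply, ← P_coe] at h
  simp only [Pi.sub_apply, Pi.smul_apply, smul_eq_mul, D2_S, riemannZeta_two, ← P_coe] at h
  change P (-v)⁻¹ * v ^ (-2 : ℤ) = P v - 1 / (2 * (π ^ 2 / 6)) * (2 * π * I / v) at h
  rw [zpow_neg, mul_inv_eq_iff_eq_mul₀ (zpow_ne_zero _ hv₀)] at h
  rw [neg_div, one_div, ← inv_neg, h]
  field_simp
  linear_combination -6 * I_sq

lemma hasQDerivAt_one_add_qSeries {a : ℕ → ℂ} (ha : HasPolyGrowth a) (c : ℂ) (hv : 0 < v.im) :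
    HasQDerivAt (fun v ↦ 1 + c * qSeries a v) (c * qSeries (fun n ↦ n * a n) v) v :=
  ((ha.hasQDerivAt_qSeries hv).const_mul c).const_add 1

lemma tendsto_const_mul_qSeries_natCast_mul {a : ℕ → ℂ} (ha : HasPolyGrowth a) (c : ℂ) :
    Tendsto (fun v ↦ c * qSeries (fun n ↦ n * a n) v) imInfty (𝓝 0) := by
  simpa using (hasPolyGrowth_natCast.mul ha).tendsto_qSeries.const_mul c

lemma qDeriv_add_one {f Df : ℂ → ℂ} (hDf : ∀ v : ℂ, 0 < v.im → HasQDerivAt f (Df v) v)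
    (hf : ∀ v : ℂ, 0 < v.im → f (v + 1) = f v) (hv : 0 < v.im) : Df (v + 1) = Df v :=
  ((hDf (v + 1) (by simpa using hv)).comp_add_const 1).unique
    ((hDf v hv).congr_of_im_gt hv hf)

lemma qDeriv_neg_one_div {f Df : ℂ → ℂ} {g : ℂ → ℂ} {d : ℂ}
    (hDf : ∀ v : ℂ, 0 < v.im → HasQDerivAt f (Df v) v)
    (hg : ∀ v : ℂ, 0 < v.im → f (-1 / v) = g v) (hv : 0 < v.im) (hd : HasQDerivAt g d v) :
    Df (-1 / v) = v ^ 2 * d := by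
  have hv₀ := ne_zero_of_im_pos hv
  have hcomp : HasQDerivAt (fun v ↦ f (-1 / v)) (Df (-1 / v) / v ^ 2) v :=
    ((hDf _ (im_neg_one_div_pos hv)).comp v (hasDerivAt_neg_one_div hv₀)).congr_deriv (by ring)
  rw [← hcomp.unique (hd.congr_of_im_gt hv hg)]
  field_simp

lemma differentiableAt_qDeriv {f Df : ℂ → ℂ}
    (hDf : ∀ v : ℂ, 0 < v.im → HasQDerivAt f (Df v) v) (hv : 0 < v.im) :
    DifferentiableAt ℂ Df v := by
  have hopen : IsOpen {v : ℂ | 0 < v.im} := isOpen_lt continuous_const Complex.continuous_im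
  have hderiv : DifferentiableAt ℂ (deriv f) v :=
    (DifferentiableOn.deriv (fun w hw ↦ (hDf w hw).differentiableAt.differentiableWithinAt)
      hopen).differentiableAt (hopen.mem_nhds hv)
  refine (hderiv.const_mul (2 * π * I)⁻¹).congr_of_eventuallyEq
    ((eventually_im_gt hv).mono fun w hw ↦ ?_)
  simp only [HasDerivAt.deriv (hDf w hw), inv_mul_cancel_left₀ two_pi_I_ne_zero]

lemma hasQDerivAt_pow_id (n : ℕ) (v : ℂ) :
    HasQDerivAt (fun v ↦ v ^ n) (n * v ^ (n - 1) / (2 * π * I)) v :=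
  (hasDerivAt_pow n v).congr_deriv (mul_div_cancel₀ _ two_pi_I_ne_zero).symm

lemma differentiableAt_P (hv : 0 < v.im) : DifferentiableAt ℂ P v :=
  (hasQDerivAt_one_add_qSeries (hasPolyGrowth_sigma 1) _ hv).differentiableAt

lemma IsLevelOneForm.serreDerivative {k : ℕ} {f Df : ℂ → ℂ} {c : ℂ} (hf : IsLevelOneForm k f c)
    (hDf : ∀ v : ℂ, 0 < v.im → HasQDerivAt f (Df v) v) (hlim : Tendsto Df imInfty (𝓝 0)) :
    IsLevelOneForm (k + 2) (fun v ↦ Df v - k / 12 * (P v * f v)) (-k / 12 * c) where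
  differentiableAt hv := (differentiableAt_qDeriv hDf hv).sub
    (((differentiableAt_P hv).mul (hf.differentiableAt hv)).const_mul _)
  add_one hv := by
    rw [qDeriv_add_one hDf (fun _ ↦ hf.add_one) hv, P_add_one, hf.add_one hv]
  neg_one_div {v} hv := by
    rw [qDeriv_neg_one_div hDf (fun _ ↦ hf.neg_one_div) hv
      ((hasQDerivAt_pow_id k v).mul (hDf v hv)), P_neg_one_div hv, hf.neg_one_div hv]
    have hπ : (π : ℂ) ≠ 0 := ofReal_ne_zero.mpr pi_ne_zero
    rcases k with _ | k
    · simp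
    · simp only [Nat.add_sub_cancel]
      field_simp
      ring
  tendsto := by
    simpa [neg_div] using hlim.sub ((tendsto_P.mul hf.tendsto).const_mul (k / 12 : ℂ))

lemma isLevelOneForm_serreDerivative_P {DP : ℂ → ℂ}
    (hDP : ∀ v : ℂ, 0 < v.im → HasQDerivAt P (DP v) v) (hlim : Tendsto DP imInfty (𝓝 0)) :
    IsLevelOneForm 4 (fun v ↦ DP v - 1 / 12 * P v ^ 2) (-1 / 12) where
  differentiableAt hv := (differentiableAt_qDeriv hDP hv).sub
    (((differentiableAt_P hv).pow 2).const_mul _)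
  add_one hv := by
    rw [qDeriv_add_one hDP (fun v _ ↦ P_add_one v) hv, P_add_one]
  neg_one_div {v} hv := by
    have hd : HasQDerivAt (fun v ↦ v ^ 2 * P v + 6 / (π * I) * v ^ 1) _ v :=
      ((hasQDerivAt_pow_id 2 v).mul (hDP v hv)).add
        ((hasQDerivAt_pow_id 1 v).const_mul (6 / (π * I)))
    rw [qDeriv_neg_one_div hDP (fun v hv ↦ (P_neg_one_div hv).trans (by ring)) hv hd,
      P_neg_one_div hv]
    have hπ : (π : ℂ) ≠ 0 := ofReal_ne_zero.mpr pi_ne_zero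
    simp only [Nat.cast_ofNat, Nat.cast_one, Nat.reduceSub, pow_one, pow_zero, mul_one]
    field_simp
    ring
  tendsto := by
    simpa [neg_div] using hlim.sub ((tendsto_P.pow 2).const_mul (1 / 12 : ℂ))

lemma hasQDerivAt_P (hv : 0 < v.im) : HasQDerivAt P ((P v ^ 2 - Q v) / 12) v := by
  have hDP (v : ℂ) (hv : 0 < v.im) : HasQDerivAt P _ v :=
    hasQDerivAt_one_add_qSeries (hasPolyGrowth_sigma 1) (-24) hv
  have h := (isLevelOneForm_serreDerivative_P hDP
    (tendsto_const_mul_qSeries_natCast_mul (hasPolyGrowth_sigma 1) _)).eq_of_weight_lt_twelve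
    (by simpa using isLevelOneForm_Q.const_mul (-1 / 12)) (by norm_num) hv
  exact (hDP v hv).congr_val (by linear_combination h)

lemma hasQDerivAt_Q (hv : 0 < v.im) : HasQDerivAt Q ((P v * Q v - R v) / 3) v := by
  have hDQ (v : ℂ) (hv : 0 < v.im) : HasQDerivAt Q _ v :=
    hasQDerivAt_one_add_qSeries (hasPolyGrowth_sigma 3) 240 hv
  have h := (isLevelOneForm_Q.serreDerivative hDQ
    (tendsto_const_mul_qSeries_natCast_mul (hasPolyGrowth_sigma 3) _)).eq_of_weight_lt_twelve
    (by simpa using isLevelOneForm_R.const_mul (-4 / 12)) (by norm_num) hv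
  push_cast at h
  exact (hDQ v hv).congr_val (by linear_combination h)

lemma hasQDerivAt_R (hv : 0 < v.im) : HasQDerivAt R ((P v * R v - Q v ^ 2) / 2) v := by
  have hDR (v : ℂ) (hv : 0 < v.im) : HasQDerivAt R _ v :=
    hasQDerivAt_one_add_qSeries (hasPolyGrowth_sigma 5) (-504) hv
  have h := (isLevelOneForm_R.serreDerivative hDR
    (tendsto_const_mul_qSeries_natCast_mul (hasPolyGrowth_sigma 5) _)).eq_of_weight_lt_twelve
    (by simpa using (isLevelOneForm_Q.mul isLevelOneForm_Q).const_mul (-6 / 12)) (by norm_num) hv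
  push_cast at h
  exact (hDR v hv).congr_val (by linear_combination h)

lemma Q_cube_sub_R_sq_ne_zero (hv : 0 < v.im) : Q v ^ 3 - R v ^ 2 ≠ 0 := by
  have h := discriminant_ne_zero ⟨v, hv⟩
  rw [discriminant_eq_E₄_cube_sub_E₆_sq, ← Q_coe, ← R_coe] at h
  exact fun h₀ ↦ h (by simp [h₀])

end Eisenstein

section LevelTwo

variable {v : ℂ}

/-- The weight two form `2 P(2v) - P(v)` on `Γ₀(2)`. Together with `e₂` and `e₃` it gives the
normalised half-period values of `℘`, the roots of `4x³ - 3Qx - R`. -/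
noncomputable def e₁ (v : ℂ) : ℂ := 2 * P (2 * v) - P v

/-- The half-period value conjugate to `e₁` under `v ↦ -1 / v`. -/
noncomputable def e₂ (v : ℂ) : ℂ := P (v / 2) / 2 - P v

/-- The half-period value conjugate to `e₂` under `v ↦ v + 1`. -/
noncomputable def e₃ (v : ℂ) : ℂ := e₂ (v + 1)

lemma P_add_two (v : ℂ) : P (v + 2) = P v := by
  rw [← one_add_one_eq_two, ← add_assoc, P_add_one, P_add_one]

lemma e₁_add_one (v : ℂ) : e₁ (v + 1) = e₁ v := by
  rw [e₁, e₁, mul_add, mul_one, P_add_one, P_add_two]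

lemma e₃_add_one (v : ℂ) : e₃ (v + 1) = e₂ v := by
  rw [e₃, e₂, e₂, P_add_one, P_add_one, show (v + 1 + 1) / 2 = v / 2 + 1 by ring, P_add_one]

lemma e₂_eq (v : ℂ) : e₂ v = -1 / 2 * e₁ (v / 2) := by
  rw [e₁, e₂, mul_div_cancel₀ v two_ne_zero]
  ring

lemma e₁_neg_one_div (hv : 0 < v.im) : e₁ (-1 / v) = v ^ 2 * e₂ v := by
  rw [e₁, e₂, show 2 * (-1 / v) = -1 / (v / 2) by field_simp, P_neg_one_div hv,
    P_neg_one_div (v := v / 2) (by simpa using hv)]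
  ring

lemma e₂_neg_one_div (hv : 0 < v.im) : e₂ (-1 / v) = v ^ 2 * e₁ v := by
  rw [e₁, e₂, show -1 / v / 2 = -1 / (2 * v) by field_simp, P_neg_one_div hv,
    P_neg_one_div (v := 2 * v) (by simpa using hv)]
  ring

lemma e₃_neg_one_div (hv : 0 < v.im) : e₃ (-1 / v) = v ^ 2 * e₃ v := by
  have hw : 0 < (v - 1).im := by simpa using hv
  have hv₀ := ne_zero_of_im_pos hv
  have hw₀ := ne_zero_of_im_pos hw
  have hu : 0 < (-1 / (v - 1) - 1).im := by simpa using im_neg_one_div_pos hw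
  have hu₀ := ne_zero_of_im_pos hu
  have hST : -1 / v + 1 = -1 / (-1 / (v - 1) - 1) := by
    rw [eq_div_iff hu₀]
    field_simp
    ring
  rw [e₃, hST, e₂_neg_one_div hu, ← e₁_add_one, sub_add_cancel, e₁_neg_one_div hw,
    ← e₃_add_one, sub_add_cancel]
  field_simp
  ring

lemma tendsto_e₁ : Tendsto e₁ imInfty (𝓝 1) := by
  convert ((tendsto_P.comp (tendsto_mul_imInfty two_pos)).const_mul 2).sub tendsto_P using 2
  · simp [e₁]
  · norm_num

lemma tendsto_e₂ : Tendsto e₂ imInfty (𝓝 (-1 / 2)) := by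
  rw [funext e₂_eq]
  simpa [Function.comp_def, inv_mul_eq_div] using
    (tendsto_e₁.comp (tendsto_mul_imInfty (inv_pos.mpr two_pos))).const_mul (-1 / 2)

lemma tendsto_e₃ : Tendsto e₃ imInfty (𝓝 (-1 / 2)) := by
  change Tendsto (fun v ↦ e₂ (v + 1)) _ _
  simpa [Function.comp_def] using tendsto_e₂.comp (tendsto_add_real_imInfty 1)

lemma hasQDerivAt_e₁_P (hv : 0 < v.im) :
    HasQDerivAt e₁ ((P (2 * v) ^ 2 - Q (2 * v)) / 3 - (P v ^ 2 - Q v) / 12) v :=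
  ((((hasQDerivAt_P (v := 2 * v) (by simpa using hv)).comp_const_mul 2).const_mul 2).sub
    (hasQDerivAt_P hv)).congr_val (by ring)

lemma differentiableAt_e₂ (hv : 0 < v.im) : DifferentiableAt ℂ e₂ v := by
  have h : DifferentiableAt ℂ e₁ (v / 2) :=
    (hasQDerivAt_e₁_P (by simpa using hv)).differentiableAt
  rw [funext e₂_eq]
  exact (h.comp v (differentiableAt_id.div_const (2 : ℂ))).const_mul _

lemma differentiableAt_e₃ (hv : 0 < v.im) : DifferentiableAt ℂ e₃ v :=
  (differentiableAt_e₂ (by simpa using hv)).comp v (differentiableAt_id.add_const 1)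

lemma e₁_add_e₂_add_e₃ (hv : 0 < v.im) : e₁ v + e₂ v + e₃ v = 0 := by
  have h : IsLevelOneForm 2 (fun v ↦ e₁ v + e₂ v + e₃ v) 0 :=
  { differentiableAt hv := ((hasQDerivAt_e₁_P hv).differentiableAt.add
      (differentiableAt_e₂ hv)).add (differentiableAt_e₃ hv)
    add_one _ := by
      rw [e₁_add_one, e₃_add_one, ← e₃]
      ring
    neg_one_div hv := by
      rw [e₁_neg_one_div hv, e₂_neg_one_div hv, e₃_neg_one_div hv]
      ring
    tendsto := by
      convert (tendsto_e₁.add tendsto_e₂).add tendsto_e₃ using 2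
      norm_num }
  exact h.eq_zero_of_weight_lt_twelve (by norm_num) hv

lemma e₁_mul_e₂_add_e₂_mul_e₃_add_e₃_mul_e₁ (hv : 0 < v.im) :
    e₁ v * e₂ v + e₂ v * e₃ v + e₃ v * e₁ v = -3 / 4 * Q v := by
  have h : IsLevelOneForm 4 (fun v ↦ e₁ v * e₂ v + e₂ v * e₃ v + e₃ v * e₁ v) (-3 / 4) :=
  { differentiableAt hv := by
      have h₁ := (hasQDerivAt_e₁_P hv).differentiableAt
      have h₂ := differentiableAt_e₂ hv
      have h₃ := differentiableAt_e₃ hv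
      exact ((h₁.mul h₂).add (h₂.mul h₃)).add (h₃.mul h₁)
    add_one _ := by
      rw [e₁_add_one, e₃_add_one, ← e₃]
      ring
    neg_one_div hv := by
      rw [e₁_neg_one_div hv, e₂_neg_one_div hv, e₃_neg_one_div hv]
      ring
    tendsto := by
      convert ((tendsto_e₁.mul tendsto_e₂).add (tendsto_e₂.mul tendsto_e₃)).add
        (tendsto_e₃.mul tendsto_e₁) using 2
      norm_num }
  exact h.eq_of_weight_lt_twelve (by simpa using isLevelOneForm_Q.const_mul (-3 / 4))
    (by norm_num) hv

lemma e₁_mul_e₂_mul_e₃ (hv : 0 < v.im) : e₁ v * e₂ v * e₃ v = 1 / 4 * R v := by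
  have h : IsLevelOneForm 6 (fun v ↦ e₁ v * e₂ v * e₃ v) (1 / 4) :=
  { differentiableAt hv := ((hasQDerivAt_e₁_P hv).differentiableAt.mul
      (differentiableAt_e₂ hv)).mul (differentiableAt_e₃ hv)
    add_one _ := by
      rw [e₁_add_one, e₃_add_one, ← e₃]
      ring
    neg_one_div hv := by
      rw [e₁_neg_one_div hv, e₂_neg_one_div hv, e₃_neg_one_div hv]
      ring
    tendsto := by
      convert (tendsto_e₁.mul tendsto_e₂).mul tendsto_e₃ using 2
      norm_num }
  exact h.eq_of_weight_lt_twelve (by simpa only [mul_one] using isLevelOneForm_R.const_mul (1 / 4))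
    (by norm_num) hv

lemma R_eq_e₁ (hv : 0 < v.im) : R v = 4 * e₁ v ^ 3 - 3 * Q v * e₁ v := by
  linear_combination -4 * e₁_mul_e₂_mul_e₃ hv - 4 * e₁ v ^ 2 * e₁_add_e₂_add_e₃ hv
    + 4 * e₁ v * e₁_mul_e₂_add_e₂_mul_e₃_add_e₃_mul_e₁ hv

lemma Q_sub_four_mul_e₁_sq_ne_zero (hv : 0 < v.im) : Q v - 4 * e₁ v ^ 2 ≠ 0 := fun h ↦
  Q_cube_sub_R_sq_ne_zero hv <| by
    rw [R_eq_e₁ hv]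
    linear_combination (Q v - e₁ v ^ 2) * (Q v - 4 * e₁ v ^ 2) * h

lemma hasQDerivAt_e₁ (hv : 0 < v.im) :
    HasQDerivAt e₁ ((e₁ v * P v + Q v - 2 * e₁ v ^ 2) / 6) v := by
  obtain ⟨d, hd⟩ : ∃ d, HasQDerivAt e₁ d v := ⟨_, hasQDerivAt_e₁_P hv⟩
  have hR := ((hd.pow 3).const_mul 4).sub (((hasQDerivAt_Q hv).const_mul 3).mul hd)
  have h := hR.unique ((hasQDerivAt_R hv).congr_of_im_gt hv fun w hw ↦ (R_eq_e₁ hw).symm)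
  push_cast at h
  rw [R_eq_e₁ hv] at h
  refine hd.congr_val (mul_left_cancel₀ (Q_sub_four_mul_e₁_sq_ne_zero hv) ?_)
  linear_combination (-1 / 3) * h

lemma five_mul_e₁_sq (hv : 0 < v.im) : 5 * e₁ v ^ 2 = Q v + 4 * Q (2 * v) := by
  have h := (hasQDerivAt_e₁_P hv).unique (hasQDerivAt_e₁ hv)
  have hP : P (2 * v) = (e₁ v + P v) / 2 := by
    rw [e₁]
    ring
  rw [hP] at h
  linear_combination 12 * h

lemma five_mul_e₂_sq (hv : 0 < v.im) : 5 * e₂ v ^ 2 = Q v + Q (v / 2) / 4 := by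
  have h := five_mul_e₁_sq (im_neg_one_div_pos hv)
  rw [show 2 * (-1 / v) = -1 / (v / 2) by field_simp, e₁_neg_one_div hv,
    isLevelOneForm_Q.neg_one_div hv,
    isLevelOneForm_Q.neg_one_div (v := v / 2) (by simpa using hv)] at h
  refine mul_left_cancel₀ (pow_ne_zero 4 (ne_zero_of_im_pos hv)) ?_
  linear_combination h

lemma five_mul_e₃_sq (hv : 0 < v.im) : 5 * e₃ v ^ 2 = Q v + Q ((v + 1) / 2) / 4 := by
  rw [e₃, five_mul_e₂_sq (by simpa using hv), isLevelOneForm_Q.add_one hv]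

end LevelTwo

section Theta

variable {v : ℂ}

/-- The form `(e₃ - e₂) / 3`, which is `θ₂⁴ / 2` in Jacobi's notation. -/
noncomputable def β (v : ℂ) : ℂ := (e₃ v - e₂ v) / 3

/-- The form `e₁² - β²`, which is `θ₃⁴ θ₄⁴` in Jacobi's notation. -/
noncomputable def W (v : ℂ) : ℂ := e₁ v ^ 2 - β v ^ 2

/-- The Hauptmodul `-θ₂⁸ / (4 θ₃⁴ θ₄⁴)` of `Γ₀(2)`, the argument of the hypergeometric series. -/
noncomputable def hauptmodul (v : ℂ) : ℂ := -β v ^ 2 / W v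

lemma Q_eq_e₁_β (hv : 0 < v.im) : Q v = e₁ v ^ 2 + 3 * β v ^ 2 := by
  rw [β]
  linear_combination (4 / 3) * e₁_mul_e₂_add_e₂_mul_e₃_add_e₃_mul_e₁ hv
    - (e₁ v + (e₂ v + e₃ v) / 3) * e₁_add_e₂_add_e₃ hv

lemma β_ne_zero (hv : 0 < v.im) : β v ≠ 0 := fun h ↦
  Q_cube_sub_R_sq_ne_zero hv <| by
    rw [R_eq_e₁ hv, Q_eq_e₁_β hv, h]
    ring

lemma W_eq (hv : 0 < v.im) : W v = -1 / 3 * (Q v - 4 * e₁ v ^ 2) := by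
  rw [Q_eq_e₁_β hv, W]
  ring

lemma W_ne_zero (hv : 0 < v.im) : W v ≠ 0 := by
  rw [W_eq hv]
  exact mul_ne_zero (by norm_num) (Q_sub_four_mul_e₁_sq_ne_zero hv)

lemma hasQDerivAt_W (hv : 0 < v.im) : HasQDerivAt W (W v * (P v - e₁ v) / 3) v := by
  have h := ((hasQDerivAt_Q hv).sub (((hasQDerivAt_e₁ hv).pow 2).const_mul 4)).const_mul (-1 / 3)
  refine (h.congr_of_im_gt hv fun w hw ↦ W_eq hw).congr_val ?_
  rw [R_eq_e₁ hv, W_eq hv]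
  push_cast
  ring

lemma hasQDerivAt_β (hv : 0 < v.im) : HasQDerivAt β (β v * (P v + 2 * e₁ v) / 6) v := by
  have hdiff : DifferentiableAt ℂ β v :=
    ((differentiableAt_e₃ hv).sub (differentiableAt_e₂ hv)).div_const 3
  have hd : HasQDerivAt β (deriv β v / (2 * π * I)) v :=
    hdiff.hasDerivAt.congr_deriv (mul_div_cancel₀ _ two_pi_I_ne_zero).symm
  have hsq := ((hasQDerivAt_Q hv).sub ((hasQDerivAt_e₁ hv).pow 2)).const_mul (1 / 3)
  have h := (hd.pow 2).unique (hsq.congr_of_im_gt hv fun w hw ↦ by rw [Q_eq_e₁_β hw]; ring)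
  push_cast at h
  rw [R_eq_e₁ hv, Q_eq_e₁_β hv] at h
  refine hd.congr_val (mul_left_cancel₀ (mul_ne_zero two_ne_zero (β_ne_zero hv)) ?_)
  linear_combination h

lemma hasQDerivAt_hauptmodul (hv : 0 < v.im) :
    HasQDerivAt hauptmodul (e₁ v * hauptmodul v) v := by
  have h := (((hasQDerivAt_β hv).pow 2).const_mul (-1)).div (hasQDerivAt_W hv) (W_ne_zero hv)
  refine (h.congr_of_im_gt hv fun w _ ↦ by rw [hauptmodul, neg_one_mul]).congr_val ?_
  rw [hauptmodul]
  field_simp [W_ne_zero hv]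
  push_cast
  ring

/-- The sequence `a` with its terms of even index replaced by zero. -/
noncomputable def oddPart (a : ℕ → ℂ) (n : ℕ) : ℂ := if Odd n then a n else 0

lemma qSeries_oddPart {a : ℕ → ℂ} (ha : HasPolyGrowth a) (hv : 0 < v.im) :
    qSeries (oddPart a) v = (qSeries a v - qSeries a (v + 1 / 2)) / 2 := by
  have hq : cexp (2 * π * I * (v + 1 / 2)) = -cexp (2 * π * I * v) := by
    rw [mul_add, Complex.exp_add, mul_one_div, mul_assoc 2, mul_div_cancel_left₀ _ two_ne_zero,
      Complex.exp_pi_mul_I, mul_neg_one]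
  have hsum {u : ℂ} (hu : 0 < u.im) : Summable fun n ↦ a n * cexp (2 * π * I * u) ^ n := by
    simpa [Function.Periodic.qParam] using
      ha.summable (Function.Periodic.norm_qParam_lt_one one_pos hu)
  simp only [qSeries_eq_tsum]
  rw [← (hsum hv).tsum_sub (hsum (by simpa using hv)), ← tsum_div_const, hq]
  refine tsum_congr fun n ↦ ?_
  rcases n.even_or_odd with hn | hn
  · rw [oddPart, if_neg (Nat.not_odd_iff_even.mpr hn), hn.neg_pow]
    ring
  · rw [oddPart, if_pos hn, hn.neg_pow]
    ring

lemma qSeries_oddPart_sigma_half (hv : 0 < v.im) :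
    qSeries (oddPart fun n ↦ σ 3 n) (v / 2) = β v * e₁ v / 8 := by
  have h := qSeries_oddPart (hasPolyGrowth_sigma 3) (v := v / 2) (by simpa using hv)
  have h₂ := five_mul_e₂_sq hv
  have h₃ := five_mul_e₃_sq hv
  rw [add_div] at h₃
  have hQ : 480 * qSeries (oddPart fun n ↦ σ 3 n) (v / 2) = Q (v / 2) - Q (v / 2 + 1 / 2) := by
    rw [h, Q, Q]
    ring
  rw [β]
  linear_combination (1 / 480) * hQ + (1 / 120) * (h₃ - h₂)
    - (e₃ v - e₂ v) / 24 * e₁_add_e₂_add_e₃ hv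

end Theta

section Hypergeometric

/-- The coefficients `(1)ₙ³ / (3/2)ₙ³`. -/
noncomputable def hyperCoeff (n : ℕ) : ℝ :=
  (ascPochhammer ℝ n).eval (1 : ℝ) ^ 3 / (ascPochhammer ℝ n).eval (3 / 2 : ℝ) ^ 3

/-- The series `∑ (n + 1/2) ^ k * (1)ₙ³ / (3/2)ₙ³ * z ^ n`, that is `z^(-1/2) (z d/dz)^k` applied to
`z^(1/2) ∑ (1)ₙ³ / (3/2)ₙ³ * z ^ n`. -/
noncomputable def hyperSeries (k : ℕ) (z : ℂ) : ℂ :=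
  powerSum (fun n ↦ (n + 1 / 2) ^ k * hyperCoeff n) z

lemma hyperCoeff_zero : hyperCoeff 0 = 1 := by simp [hyperCoeff]

lemma hyperCoeff_succ (n : ℕ) :
    hyperCoeff (n + 1) = ((n + 1) / (n + 1 + 1 / 2)) ^ 3 * hyperCoeff n := by
  rw [hyperCoeff, hyperCoeff, ascPochhammer_succ_eval, ascPochhammer_succ_eval, mul_pow, mul_pow,
    mul_div_mul_comm, mul_comm, ← div_pow, add_comm 1 (n : ℝ),
    show (3 / 2 : ℝ) + n = n + 1 + 1 / 2 by ring]

lemma hyperCoeff_mem_Icc (n : ℕ) : hyperCoeff n ∈ Set.Icc (0 : ℝ) 1 := by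
  induction n with
  | zero => simp [hyperCoeff_zero]
  | succ n ih =>
    have hratio : ((n : ℝ) + 1) / (n + 1 + 1 / 2) ≤ 1 :=
      (div_le_one (by positivity)).mpr (by linarith)
    rw [hyperCoeff_succ]
    exact ⟨mul_nonneg (by positivity) ih.1,
      mul_le_one₀ (pow_le_one₀ (by positivity) hratio) ih.1 ih.2⟩

lemma hasPolyGrowth_hyperCoeff : HasPolyGrowth fun n ↦ (hyperCoeff n : ℂ) :=
  hasPolyGrowth_of_norm_le (C := 1) (k := 0) fun n ↦ by
    rw [Complex.norm_real, Real.norm_of_nonneg (hyperCoeff_mem_Icc n).1, pow_zero, mul_one]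
    exact (hyperCoeff_mem_Icc n).2

lemma hasPolyGrowth_natCast_add_half : HasPolyGrowth fun n ↦ (n : ℂ) + 1 / 2 := by
  refine ⟨1, IsBigO.of_bound 2 ((eventually_ge_atTop 1).mono fun n hn ↦ ?_)⟩
  have hn' : (1 : ℝ) ≤ n := by exact_mod_cast hn
  rw [pow_one, Complex.norm_natCast]
  refine (norm_add_le _ _).trans ?_
  rw [Complex.norm_natCast]
  norm_num
  linarith

lemma hasPolyGrowth_hyperSeries (k : ℕ) :
    HasPolyGrowth fun n ↦ ((n : ℂ) + 1 / 2) ^ k * hyperCoeff n := by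
  induction k with
  | zero => simpa using hasPolyGrowth_hyperCoeff
  | succ k ih => simpa only [pow_succ', mul_assoc] using hasPolyGrowth_natCast_add_half.mul ih

variable {z : ℂ}

lemma hasSum_hyperSeries (k : ℕ) (hz : ‖z‖ < 1) :
    HasSum (fun n : ℕ ↦ (n + 1 / 2) ^ k * hyperCoeff n * z ^ n) (hyperSeries k z) :=
  ((hasPolyGrowth_hyperSeries k).summable hz).hasSum

lemma powerSum_natCast_mul_hyperSeries (k : ℕ) (hz : ‖z‖ < 1) :
    powerSum (fun n ↦ n * ((n + 1 / 2) ^ k * hyperCoeff n)) z =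
      hyperSeries (k + 1) z - hyperSeries k z / 2 := by
  have hk := (hasPolyGrowth_hyperSeries k).summable hz
  have hk' := (hasPolyGrowth_hyperSeries (k + 1)).summable hz
  rw [hyperSeries, hyperSeries, powerSum, powerSum, powerSum, ← tsum_div_const,
    ← hk'.tsum_sub (hk.div_const 2)]
  exact tsum_congr fun n ↦ by ring

lemma hyperSeries_ode (hz : ‖z‖ < 1) :
    hyperSeries 3 z - z * (hyperSeries 3 z + 3 / 2 * hyperSeries 2 z + 3 / 4 * hyperSeries 1 z
      + 1 / 8 * hyperSeries 0 z) = 1 / 8 := by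
  have hs (k : ℕ) := (hasPolyGrowth_hyperSeries k).summable hz
  have hcoeff (n : ℕ) : ((n : ℂ) + 1 + 1 / 2) ^ 3 * hyperCoeff (n + 1) =
      ((n + 1 / 2) + 1 / 2) ^ 3 * hyperCoeff n := by
    have h : ((n : ℝ) + 1 + 1 / 2) ^ 3 * hyperCoeff (n + 1) =
        ((n + 1 / 2) + 1 / 2) ^ 3 * hyperCoeff n := by
      rw [hyperCoeff_succ, div_pow, ← mul_assoc, mul_div_cancel₀ _ (by positivity), add_assoc,
        add_halves]
    simpa using congrArg ofReal h
  have hshift : hyperSeries 3 z = 1 / 8 + z * ∑' n : ℕ,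
      (((n : ℂ) + 1 / 2) + 1 / 2) ^ 3 * hyperCoeff n * z ^ n := by
    rw [hyperSeries, powerSum, (hs 3).tsum_eq_zero_add, ← tsum_mul_left]
    congr 1
    · norm_num [hyperCoeff_zero]
    · refine tsum_congr fun n ↦ ?_
      rw [← hcoeff]
      push_cast
      ring
  have hcube : ∑' n : ℕ, (((n : ℂ) + 1 / 2) + 1 / 2) ^ 3 * hyperCoeff n * z ^ n =
      hyperSeries 3 z + 3 / 2 * hyperSeries 2 z + 3 / 4 * hyperSeries 1 z
        + 1 / 8 * hyperSeries 0 z := by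
    simp only [hyperSeries, powerSum]
    rw [← tsum_mul_left, ← tsum_mul_left, ← tsum_mul_left, ← (hs 3).tsum_add ((hs 2).mul_left _),
      ← ((hs 3).add ((hs 2).mul_left _)).tsum_add ((hs 1).mul_left _),
      ← (((hs 3).add ((hs 2).mul_left _)).add ((hs 1).mul_left _)).tsum_add ((hs 0).mul_left _)]
    exact tsum_congr fun n ↦ by ring
  rw [← hcube]
  linear_combination hshift

end Hypergeometric

section Bounds

-- The bound `1.92 < v.im` leaves room for the only point at which the series is finally evaluated,
-- whose imaginary part is `√15 / 2`, about `1.936`.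

variable {v : ℂ}

lemma norm_sigma_le_pow (k n : ℕ) : ‖(σ k n : ℂ)‖ ≤ ((2 : ℝ) ^ (k + 1)) ^ n := by
  rw [Complex.norm_natCast, ← pow_mul, mul_comm, pow_mul]
  have hn : (n : ℝ) ≤ 2 ^ n := by exact_mod_cast Nat.lt_two_pow_self.le
  calc (σ k n : ℝ) ≤ (n : ℝ) ^ (k + 1) := by
        exact_mod_cast ArithmeticFunction.sigma_le_pow_succ k n
    _ ≤ _ := by gcongr

lemma norm_qSeries_sigma_one_le (hv : ‖Function.Periodic.qParam 1 v‖ ≤ 1 / 40000) :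
    ‖qSeries (fun n ↦ σ 1 n) v‖ ≤ 1 / 9999 := by
  refine (norm_powerSum_le (K := 2 ^ 2) (by norm_num) (by simp) (norm_sigma_le_pow 1)
    (by linarith)).trans ?_
  rw [div_le_iff₀ (by linarith)]
  linarith

lemma norm_qSeries_oddPart_sigma_three_le (hv : ‖Function.Periodic.qParam 1 v‖ ≤ 1 / 320) :
    ‖qSeries (oddPart fun n ↦ σ 3 n) v‖ ≤ 1 / 19 := by
  refine (norm_powerSum_le (K := 2 ^ 4) (by norm_num) (by simp [oddPart]) (fun n ↦ ?_)
    (by linarith)).trans ?_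
  · rw [oddPart]
    split_ifs
    · exact norm_sigma_le_pow 3 n
    · simp
  · rw [div_le_iff₀ (by linarith)]
    linarith

lemma norm_qParam_half_le (hv : 1.92 < v.im) : ‖Function.Periodic.qParam 1 (v / 2)‖ ≤ 1 / 320 := by
  have him : (v / 2).im = v.im / 2 := by simp
  rw [Function.Periodic.norm_qParam, him, one_div]
  calc Real.exp (-2 * π * (v.im / 2) / 1) ≤ Real.exp (-(6 : ℕ)) := by
        gcongr
        norm_num
        nlinarith [Real.pi_gt_d2]
    _ = (Real.exp 1 ^ 6)⁻¹ := by rw [← Real.exp_nat_mul, ← Real.exp_neg, mul_one]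
    _ ≤ (2.7 ^ 6)⁻¹ := by
        gcongr
        linarith [Real.exp_one_gt_d9]
    _ ≤ 320⁻¹ := by norm_num

lemma norm_qParam_le (hv : 1.92 < v.im) : ‖Function.Periodic.qParam 1 v‖ ≤ 1 / 40000 := by
  have hsq : Function.Periodic.qParam 1 v = Function.Periodic.qParam 1 (v / 2) ^ 2 := by
    rw [Function.Periodic.qParam, Function.Periodic.qParam, ← Complex.exp_nat_mul]
    congr 1
    push_cast
    ring
  rw [hsq, norm_pow]
  exact (pow_le_pow_left₀ (norm_nonneg _) (norm_qParam_half_le hv) 2).trans (by norm_num)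

lemma le_norm_e₁ (hv : 1.92 < v.im) : 99 / 100 ≤ ‖e₁ v‖ := by
  have h₁ := norm_qSeries_sigma_one_le (norm_qParam_le hv)
  have h₂ := norm_qSeries_sigma_one_le (norm_qParam_le (v := 2 * v) (by simp; linarith))
  have he : 1 - e₁ v =
      48 * qSeries (fun n ↦ σ 1 n) (2 * v) - 24 * qSeries (fun n ↦ σ 1 n) v := by
    rw [e₁, P, P]
    ring
  have hdist : ‖1 - e₁ v‖ ≤ 1 / 100 := by
    rw [he]
    refine (norm_sub_le _ _).trans ?_
    rw [norm_mul, norm_mul]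
    norm_num at h₁ h₂ ⊢
    linarith
  have htri := norm_sub_norm_le 1 (1 - e₁ v)
  rw [norm_one, sub_sub_cancel] at htri
  linarith

lemma e₁_ne_zero (hv : 1.92 < v.im) : e₁ v ≠ 0 := by
  rw [← norm_pos_iff]
  linarith [le_norm_e₁ hv]

lemma norm_β_le (hv : 1.92 < v.im) : ‖β v‖ ≤ ‖e₁ v‖ / 2 := by
  have hodd := norm_qSeries_oddPart_sigma_three_le (norm_qParam_half_le hv)
  have he := le_norm_e₁ hv
  rw [qSeries_oddPart_sigma_half (by linarith), norm_div, norm_mul, Complex.norm_ofNat] at hodd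
  nlinarith [norm_nonneg (β v)]

lemma norm_hauptmodul_lt_one (hv : 1.92 < v.im) : ‖hauptmodul v‖ < 1 := by
  have hβ := pow_le_pow_left₀ (norm_nonneg _) (norm_β_le hv) 2
  have he := le_norm_e₁ hv
  have hW : ‖e₁ v‖ ^ 2 - ‖β v‖ ^ 2 ≤ ‖W v‖ := by
    rw [W, ← norm_pow, ← norm_pow]
    exact norm_sub_norm_le _ _
  rw [hauptmodul, norm_div, norm_neg, norm_pow,
    div_lt_one (norm_pos_iff.mpr (W_ne_zero (by linarith)))]
  nlinarith

end Bounds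

section HypergeometricPullback

variable {v : ℂ}

lemma hasQDerivAt_hyperSeries (k : ℕ) (hv : 1.92 < v.im) :
    HasQDerivAt (fun v ↦ hyperSeries k (hauptmodul v))
      (e₁ v * (hyperSeries (k + 1) (hauptmodul v) - hyperSeries k (hauptmodul v) / 2)) v := by
  have hz := norm_hauptmodul_lt_one hv
  rw [← powerSum_natCast_mul_hyperSeries k hz]
  exact (hasPolyGrowth_hyperSeries k).hasQDerivAt_powerSum_comp hz
    (hasQDerivAt_hauptmodul (by linarith))

/-- The form `β / W = θ₂⁴ / (2 θ₃⁴ θ₄⁴)` of weight `-2`. -/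
noncomputable def weightFactor (v : ℂ) : ℂ := β v / W v

lemma hasQDerivAt_weightFactor (hv : 0 < v.im) :
    HasQDerivAt weightFactor (weightFactor v * (4 * e₁ v - P v) / 6) v := by
  refine ((hasQDerivAt_β hv).div (hasQDerivAt_W hv) (W_ne_zero hv)).congr_val ?_
  rw [weightFactor]
  field_simp [W_ne_zero hv]
  ring

/-- The hypergeometric series transported to the upper half-plane, with weight `-2`. It turns out
to be an iterated integral of the odd part of the `q`-expansion of `E₄` at `v / 2`. -/
noncomputable def G₀ (v : ℂ) : ℂ := weightFactor v * hyperSeries 0 (hauptmodul v)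

/-- The first normalised derivative of `G₀`. -/
noncomputable def G₁ (v : ℂ) : ℂ :=
  weightFactor v * (e₁ v * hyperSeries 1 (hauptmodul v)
    - 1 / 6 * ((P v - e₁ v) * hyperSeries 0 (hauptmodul v)))

/-- The second normalised derivative of `G₀`. -/
noncomputable def G₂ (v : ℂ) : ℂ :=
  weightFactor v * (e₁ v ^ 2 * hyperSeries 2 (hauptmodul v)
    + 1 / 6 * ((Q v - e₁ v * P v) * hyperSeries 1 (hauptmodul v))
    + 1 / 72 * ((P v ^ 2 - 2 * (e₁ v * P v) - 2 * e₁ v ^ 2 + 3 * Q v)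
      * hyperSeries 0 (hauptmodul v)))

lemma hasQDerivAt_G₀ (hv : 1.92 < v.im) : HasQDerivAt G₀ (G₁ v) v := by
  have hv₀ : 0 < v.im := by linarith
  refine ((hasQDerivAt_weightFactor hv₀).mul (hasQDerivAt_hyperSeries 0 hv)).congr_val ?_
  rw [G₁]
  ring

lemma hasQDerivAt_G₁ (hv : 1.92 < v.im) : HasQDerivAt G₁ (G₂ v) v := by
  have hv₀ : 0 < v.im := by linarith
  refine ((hasQDerivAt_weightFactor hv₀).mul
    (((hasQDerivAt_e₁ hv₀).mul (hasQDerivAt_hyperSeries 1 hv)).sub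
      ((((hasQDerivAt_P hv₀).sub (hasQDerivAt_e₁ hv₀)).mul
        (hasQDerivAt_hyperSeries 0 hv)).const_mul (1 / 6)))).congr_val ?_
  rw [G₂]
  ring

lemma hyperSeries_hauptmodul_ode (hv : 1.92 < v.im) :
    e₁ v ^ 2 * hyperSeries 3 (hauptmodul v) + β v ^ 2 * (3 / 2 * hyperSeries 2 (hauptmodul v)
      + 3 / 4 * hyperSeries 1 (hauptmodul v) + 1 / 8 * hyperSeries 0 (hauptmodul v)) = W v / 8 := by
  have hode := hyperSeries_ode (norm_hauptmodul_lt_one hv)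
  have hz : W v * hauptmodul v = -β v ^ 2 := by
    rw [hauptmodul, mul_div_cancel₀ _ (W_ne_zero (by linarith))]
  have hW : e₁ v ^ 2 = W v + β v ^ 2 := by
    rw [W]
    ring
  linear_combination W v * hode + hyperSeries 3 (hauptmodul v) * hW
    + (hyperSeries 3 (hauptmodul v) + 3 / 2 * hyperSeries 2 (hauptmodul v)
      + 3 / 4 * hyperSeries 1 (hauptmodul v) + 1 / 8 * hyperSeries 0 (hauptmodul v)) * hz

lemma hasQDerivAt_G₂ (hv : 1.92 < v.im) :
    HasQDerivAt G₂ (qSeries (oddPart fun n ↦ σ 3 n) (v / 2)) v := by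
  have hv₀ : 0 < v.im := by linarith
  have he := hasQDerivAt_e₁ hv₀
  have hP := hasQDerivAt_P hv₀
  have hQ := hasQDerivAt_Q hv₀
  have hφ (k : ℕ) := hasQDerivAt_hyperSeries k hv
  have hβ : β v = weightFactor v * W v := (div_mul_cancel₀ _ (W_ne_zero hv₀)).symm
  refine ((hasQDerivAt_weightFactor hv₀).mul ((((he.pow 2).mul (hφ 2)).add
    (((hQ.sub (he.mul hP)).mul (hφ 1)).const_mul (1 / 6))).add
    ((((((hP.pow 2).sub ((he.mul hP).const_mul 2)).sub ((he.pow 2).const_mul 2)).add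
      (hQ.const_mul 3)).mul (hφ 0)).const_mul (1 / 72)))).congr_val ?_
  rw [qSeries_oddPart_sigma_half hv₀, R_eq_e₁ hv₀, Q_eq_e₁_β hv₀]
  push_cast
  linear_combination weightFactor v * e₁ v * hyperSeries_hauptmodul_ode hv - e₁ v / 8 * hβ

/-- The coefficients `σ₃(n) / n³` of the third iterated integral of `∑ σ₃(n) qⁿ`. -/
noncomputable def eichlerCoeff (n : ℕ) : ℂ := σ 3 n / n ^ 3

lemma hasPolyGrowth_eichlerCoeff : HasPolyGrowth eichlerCoeff :=
  hasPolyGrowth_of_norm_le (C := 1) (k := 1) fun n ↦ by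
    rw [eichlerCoeff, norm_div, norm_pow, Complex.norm_natCast, Complex.norm_natCast, one_mul,
      pow_one]
    refine div_le_of_le_mul₀ (by positivity) (by positivity) ?_
    exact_mod_cast (ArithmeticFunction.sigma_le_pow_succ 3 n).trans_eq (pow_succ' n 3)

lemma natCast_pow_three_mul_eichlerCoeff (n : ℕ) :
    (n : ℂ) * (n * (n * eichlerCoeff n)) = σ 3 n := by
  rcases eq_or_ne n 0 with rfl | hn
  · simp
  · rw [eichlerCoeff]
    field_simp

lemma natCast_mul_oddPart (a : ℕ → ℂ) :
    (fun n : ℕ ↦ (n : ℂ) * oddPart a n) = oddPart fun n ↦ n * a n := by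
  ext n
  simp [oddPart]

lemma HasPolyGrowth.oddPart {a : ℕ → ℂ} (ha : HasPolyGrowth a) : HasPolyGrowth (oddPart a) := by
  obtain ⟨k, hk⟩ := ha
  refine ⟨k, (IsBigO.of_bound 1 (.of_forall fun n ↦ ?_)).trans hk⟩
  by_cases hn : Odd n <;> simp [RamanujanSeries.oddPart, hn]

lemma HasPolyGrowth.hasQDerivAt_qSeries_half {a : ℕ → ℂ} (ha : HasPolyGrowth a) (hv : 0 < v.im) :
    HasQDerivAt (fun v ↦ qSeries a (v / 2)) (1 / 2 * qSeries (fun n ↦ n * a n) (v / 2)) v := by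
  simpa only [one_div, inv_mul_eq_div] using
    (ha.hasQDerivAt_qSeries (v := 2⁻¹ * v) (by simpa using hv)).comp_const_mul 2⁻¹

lemma HasPolyGrowth.tendsto_qSeries_oddPart_half {a : ℕ → ℂ} (ha : HasPolyGrowth a) (c : ℂ) :
    Tendsto (fun v ↦ c * qSeries (RamanujanSeries.oddPart a) (v / 2)) imInfty (𝓝 0) := by
  simpa [Function.comp_def, inv_mul_eq_div, RamanujanSeries.oddPart] using
    (ha.oddPart.tendsto_qSeries.comp (tendsto_mul_imInfty (inv_pos.mpr two_pos))).const_mul c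

lemma tendsto_β : Tendsto β imInfty (𝓝 0) := by
  have h := (tendsto_e₃.sub tendsto_e₂).div_const 3
  rwa [sub_self, zero_div] at h

lemma tendsto_W : Tendsto W imInfty (𝓝 1) := by
  have h := (tendsto_e₁.pow 2).sub (tendsto_β.pow 2)
  rwa [one_pow, zero_pow two_ne_zero, sub_zero] at h

lemma tendsto_weightFactor : Tendsto weightFactor imInfty (𝓝 0) := by
  have h := tendsto_β.div tendsto_W one_ne_zero
  rwa [zero_div] at h

lemma tendsto_hauptmodul : Tendsto hauptmodul imInfty (𝓝 0) := by
  have h := (tendsto_β.pow 2).neg.div tendsto_W one_ne_zero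
  rwa [zero_pow two_ne_zero, neg_zero, zero_div] at h

lemma tendsto_hyperSeries (k : ℕ) : Tendsto (fun v ↦ hyperSeries k (hauptmodul v)) imInfty
    (𝓝 ((((0 : ℕ) : ℂ) + 1 / 2) ^ k * hyperCoeff 0)) :=
  (hasPolyGrowth_hyperSeries k).tendsto_powerSum.comp tendsto_hauptmodul

lemma tendsto_weightFactor_mul {f : ℂ → ℂ} {c : ℂ} (hf : Tendsto f imInfty (𝓝 c)) :
    Tendsto (fun v ↦ weightFactor v * f v) imInfty (𝓝 0) := by
  have h := tendsto_weightFactor.mul hf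
  rwa [zero_mul] at h

lemma tendsto_G₀ : Tendsto G₀ imInfty (𝓝 0) :=
  tendsto_weightFactor_mul (tendsto_hyperSeries 0)

lemma tendsto_G₁ : Tendsto G₁ imInfty (𝓝 0) :=
  tendsto_weightFactor_mul ((tendsto_e₁.mul (tendsto_hyperSeries 1)).sub
    (((tendsto_P.sub tendsto_e₁).mul (tendsto_hyperSeries 0)).const_mul (1 / 6)))

lemma tendsto_G₂ : Tendsto G₂ imInfty (𝓝 0) :=
  tendsto_weightFactor_mul
    ((((tendsto_e₁.pow 2).mul (tendsto_hyperSeries 2)).add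
      (((isLevelOneForm_Q.tendsto.sub (tendsto_e₁.mul tendsto_P)).mul
        (tendsto_hyperSeries 1)).const_mul (1 / 6))).add
      ((((((tendsto_P.pow 2).sub ((tendsto_e₁.mul tendsto_P).const_mul 2)).sub
        ((tendsto_e₁.pow 2).const_mul 2)).add (isLevelOneForm_Q.tendsto.const_mul 3)).mul
        (tendsto_hyperSeries 0)).const_mul (1 / 72)))

lemma eq_qSeries_oddPart_half {G g : ℂ → ℂ} {a : ℕ → ℂ} {c : ℂ} (ha : HasPolyGrowth a)
    (hG : ∀ v : ℂ, 1.92 < v.im → HasQDerivAt G (g v) v) (hlim : Tendsto G imInfty (𝓝 0))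
    (hg : ∀ v : ℂ, 1.92 < v.im → g v = c * qSeries (oddPart fun n ↦ n * a n) (v / 2))
    (hv : 1.92 < v.im) : G v = 2 * c * qSeries (oddPart a) (v / 2) := by
  refine eq_of_hasQDerivAt_of_tendsto hG (fun w hw ↦ ?_)
    (by simpa only [sub_zero] using hlim.sub (ha.tendsto_qSeries_oddPart_half (2 * c))) hv
  have hw₀ : 0 < w.im := by linarith
  refine ((ha.oddPart.hasQDerivAt_qSeries_half hw₀).const_mul (2 * c)).congr_val ?_
  rw [natCast_mul_oddPart, hg w hw]
  ring

lemma G₂_eq (hv : 1.92 < v.im) :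
    G₂ v = 2 * qSeries (oddPart fun n ↦ n * (n * eichlerCoeff n)) (v / 2) := by
  have h := eq_qSeries_oddPart_half (c := 1)
    (hasPolyGrowth_natCast.mul (hasPolyGrowth_natCast.mul hasPolyGrowth_eichlerCoeff))
    (fun _ ↦ hasQDerivAt_G₂) tendsto_G₂
    (fun _ _ ↦ by simp only [natCast_pow_three_mul_eichlerCoeff, one_mul]) hv
  rwa [mul_one] at h

lemma G₁_eq (hv : 1.92 < v.im) :
    G₁ v = 4 * qSeries (oddPart fun n ↦ n * eichlerCoeff n) (v / 2) := by
  have h := eq_qSeries_oddPart_half (hasPolyGrowth_natCast.mul hasPolyGrowth_eichlerCoeff)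
    (fun _ ↦ hasQDerivAt_G₁) tendsto_G₁ (fun _ ↦ G₂_eq) hv
  norm_num at h
  exact h

lemma G₀_eq (hv : 1.92 < v.im) : G₀ v = 8 * qSeries (oddPart eichlerCoeff) (v / 2) := by
  have h := eq_qSeries_oddPart_half hasPolyGrowth_eichlerCoeff (fun _ ↦ hasQDerivAt_G₀) tendsto_G₀
    (fun _ ↦ G₁_eq) hv
  norm_num at h
  exact h

end HypergeometricPullback

section Period

lemma exists_quadratic_of_hasDerivAt {c : ℝ} {p p₁ p₂ : ℂ → ℂ}
    (hp : ∀ v : ℂ, c < v.im → HasDerivAt p (p₁ v) v)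
    (hp₁ : ∀ v : ℂ, c < v.im → HasDerivAt p₁ (p₂ v) v)
    (hp₂ : ∀ v : ℂ, c < v.im → HasDerivAt p₂ 0 v) :
    ∃ x y z, ∀ v : ℂ, c < v.im → p v = x + y * v + z * v ^ 2 := by
  obtain ⟨z, hz⟩ := exists_eq_const_of_hasDerivAt_zero hp₂
  obtain ⟨y, hy⟩ := exists_eq_const_of_hasDerivAt_zero (f := fun v ↦ p₁ v - z * v) fun v hv ↦
    ((hp₁ v hv).sub ((hasDerivAt_id v).const_mul z)).congr_deriv (by simp [hz v hv])
  obtain ⟨x, hx⟩ := exists_eq_const_of_hasDerivAt_zero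
    (f := fun v ↦ p v - y * v - z / 2 * v ^ 2) fun v hv ↦
    (((hp v hv).sub ((hasDerivAt_id v).const_mul y)).sub
      ((hasDerivAt_pow 2 v).const_mul (z / 2))).congr_deriv
        (by push_cast; linear_combination hy v hv)
  exact ⟨x, y, z / 2, fun v hv ↦ by linear_combination hx v hv⟩

/-- Bol's identity: the third derivative intertwines the actions of weights `-2` and `4`. -/
lemma exists_quadratic_of_weight_four {F F₁ F₂ F₃ : ℂ → ℂ}
    (hF : ∀ v : ℂ, 0 < v.im → HasDerivAt F (F₁ v) v)
    (hF₁ : ∀ v : ℂ, 0 < v.im → HasDerivAt F₁ (F₂ v) v)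
    (hF₂ : ∀ v : ℂ, 0 < v.im → HasDerivAt F₂ (F₃ v) v)
    (hF₃ : ∀ v : ℂ, 0 < v.im → F₃ (-1 / v) = v ^ 4 * F₃ v) :
    ∃ x y z, ∀ v : ℂ, 0 < v.im → v ^ 2 * F (-1 / v) - F v = x + y * v + z * v ^ 2 := by
  have hS {f g : ℂ → ℂ} (hf : ∀ v : ℂ, 0 < v.im → HasDerivAt f (g v) v) {v : ℂ} (hv : 0 < v.im) :
      HasDerivAt (fun v ↦ f (-1 / v)) (g (-1 / v) * (1 / v ^ 2)) v :=
    (hf _ (im_neg_one_div_pos hv)).comp v (hasDerivAt_neg_one_div (ne_zero_of_im_pos hv))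
  refine exists_quadratic_of_hasDerivAt
    (p₁ := fun v ↦ 2 * v * F (-1 / v) + F₁ (-1 / v) - F₁ v)
    (p₂ := fun v ↦ 2 * F (-1 / v) - 2 * (-1 / v) * F₁ (-1 / v)
      + (-1 / v) ^ 2 * F₂ (-1 / v) - F₂ v) ?_ ?_ ?_ <;>
    intro v hv <;> have hv₀ := ne_zero_of_im_pos hv
  · refine (((hasDerivAt_pow 2 v).mul (hS hF hv)).sub (hF v hv)).congr_deriv ?_
    field_simp
    push_cast
    ring
  · refine (((((hasDerivAt_id v).const_mul 2).mul (hS hF hv)).add (hS hF₁ hv)).sub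
      (hF₁ v hv)).congr_deriv ?_
    simp only [id]
    field_simp
    ring
  · have hd := hasDerivAt_neg_one_div hv₀
    refine (((((hS hF hv).const_mul 2).sub ((hd.const_mul 2).mul (hS hF₁ hv))).add
      ((hd.fun_pow 2).mul (hS hF₂ hv))).sub (hF₂ v hv)).congr_deriv ?_
    rw [hF₃ v hv]
    push_cast
    field_simp
    ring

lemma eq_neg_of_slash_S_sq {E : ℂ → ℂ} {x y z : ℂ}
    (hS : ∀ v : ℂ, 0 < v.im → v ^ 2 * E (-1 / v) - E v = x + y * v + z * v ^ 2) : z = -x := by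
  have h₁ : -1 / (2 * I) = I / 2 := by
    rw [div_eq_iff (by simp)]
    linear_combination -I_sq
  have h₂ : -1 / (I / 2) = 2 * I := by
    rw [div_eq_iff (by simp)]
    linear_combination -I_sq
  have hS₁ := hS (2 * I) (by simp)
  have hS₂ := hS (I / 2) (by simp)
  rw [h₁] at hS₁
  rw [h₂] at hS₂
  linear_combination (hS₁ - 4 * hS₂ - (4 * E (I / 2) - E (2 * I) - 3 * z) * I_sq) / 3

/-- The relation `(ST)³ = 1` on periods, evaluated at the point `i`. -/
lemma eq_neg_five_mul_of_slash_ST_cube {E : ℂ → ℂ} {κ x y : ℂ}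
    (hT : ∀ v : ℂ, 0 < v.im → E (v + 1) = E v + κ * (3 * v ^ 2 + 3 * v + 1))
    (hS : ∀ v : ℂ, 0 < v.im → v ^ 2 * E (-1 / v) - E v = x + y * v - x * v ^ 2) :
    y = -5 * κ := by
  have hI : -1 / I = I := by simp [neg_div]
  have h₁ : -1 / (I + 1) = (I - 1) / 2 :=
    (eq_div_of_mul_eq (ne_zero_of_im_pos (by simp)) (by linear_combination I_sq / 2)).symm
  have h₂ : -1 / ((I + 1) / 2) = I - 1 :=
    (eq_div_of_mul_eq (ne_zero_of_im_pos (by simp)) (by linear_combination I_sq / 2)).symm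
  have hS₀ := hS I (by simp)
  have hS₁ := hS (I + 1) (by simp)
  have hS₂ := hS ((I + 1) / 2) (by simp)
  have hT₀ := hT I (by simp)
  have hT₁ := hT (I - 1) (by simp)
  have hT₂ := hT ((I - 1) / 2) (by simp)
  rw [hI] at hS₀
  rw [h₁] at hS₁
  rw [h₂] at hS₂
  rw [sub_add_cancel] at hT₁
  rw [show (I - 1) / 2 + 1 = (I + 1) / 2 by ring] at hT₂
  refine mul_left_cancel₀ I_ne_zero ?_
  linear_combination hS₀ - hS₁ - 2 * I * hS₂ - hT₀ + hT₁ - 2 * I * hT₂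
    + (-E I + (I / 2 + 1) * E (I - 1) + E ((I - 1) / 2) - y + (1 + I / 2) * x
      - 3 / 2 * I * κ) * I_sq

end Period

section EichlerIntegral

variable {v : ℂ}

lemma HasPolyGrowth.hasDerivAt_pow_add_qSeries {a : ℕ → ℂ} (ha : HasPolyGrowth a) (hv : 0 < v.im)
    (c : ℂ) (k m : ℕ) :
    HasDerivAt (fun v ↦ c * v ^ k + (2 * π * I) ^ m * qSeries a v)
      (c * k * v ^ (k - 1) + (2 * π * I) ^ (m + 1) * qSeries (fun n ↦ n * a n) v) v :=
  (((hasDerivAt_pow k v).const_mul c).add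
    ((ha.hasQDerivAt_qSeries hv).const_mul ((2 * π * I) ^ m))).congr_deriv (by ring)

/-- An iterated integral of `(2πi)³ E₄ / 240`: the cubic term takes care of the constant term. -/
noncomputable def eichlerIntegral (v : ℂ) : ℂ :=
  (2 * π * I) ^ 3 / 1440 * v ^ 3 + qSeries eichlerCoeff v

lemma eichlerIntegral_add_one (v : ℂ) : eichlerIntegral (v + 1)
    = eichlerIntegral v + (2 * π * I) ^ 3 / 1440 * (3 * v ^ 2 + 3 * v + 1) := by
  rw [eichlerIntegral, eichlerIntegral, qSeries_add_one]
  ring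

lemma exists_quadratic_eichlerIntegral : ∃ x y z, ∀ v : ℂ, 0 < v.im →
    v ^ 2 * eichlerIntegral (-1 / v) - eichlerIntegral v = x + y * v + z * v ^ 2 := by
  have hPG₀ := hasPolyGrowth_eichlerCoeff
  have hPG₁ := hasPolyGrowth_natCast.mul hPG₀
  have hPG₂ := hasPolyGrowth_natCast.mul hPG₁
  have h := exists_quadratic_of_weight_four
    (fun v hv ↦ hPG₀.hasDerivAt_pow_add_qSeries hv ((2 * π * I) ^ 3 / 1440) 3 0)
    (fun v hv ↦ hPG₁.hasDerivAt_pow_add_qSeries hv _ 2 1)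
    (fun v hv ↦ hPG₂.hasDerivAt_pow_add_qSeries hv _ 1 2) fun v hv ↦ ?_
  · simpa only [eichlerIntegral, pow_zero, one_mul] using h
  · have hQ := isLevelOneForm_Q.neg_one_div hv
    simp only [natCast_pow_three_mul_eichlerCoeff]
    rw [Q, Q] at hQ
    push_cast
    linear_combination (2 * π * I) ^ 3 / 240 * hQ

lemma exists_qSeries_eichlerCoeff_neg_one_div : ∃ a, ∀ v : ℂ, 0 < v.im →
    v ^ 2 * (a + qSeries eichlerCoeff (-1 / v)) - (a + qSeries eichlerCoeff v)
      = (2 * π * I) ^ 3 / 1440 * (v ^ 3 - 5 * v + 1 / v) := by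
  obtain ⟨x, y, z, h⟩ := exists_quadratic_eichlerIntegral
  obtain rfl := eq_neg_of_slash_S_sq h
  obtain rfl := eq_neg_five_mul_of_slash_ST_cube (x := x) (y := y)
    (fun v _ ↦ eichlerIntegral_add_one v) fun v hv ↦ (h v hv).trans (by ring)
  refine ⟨x, fun v hv ↦ ?_⟩
  have hv₀ := ne_zero_of_im_pos hv
  have hcube : v ^ 2 * (-1 / v) ^ 3 = -(1 / v) := by field_simp
  have h := h v hv
  rw [eichlerIntegral, eichlerIntegral] at h
  linear_combination h - (2 * π * I) ^ 3 / 1440 * hcube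

lemma qSeries_natCast_mul_eichlerCoeff_neg_one_div {a : ℂ}
    (h : ∀ v : ℂ, 0 < v.im → v ^ 2 * (a + qSeries eichlerCoeff (-1 / v))
      - (a + qSeries eichlerCoeff v) = (2 * π * I) ^ 3 / 1440 * (v ^ 3 - 5 * v + 1 / v))
    (hv : 0 < v.im) :
    2 * v * (a + qSeries eichlerCoeff (-1 / v))
      + 2 * π * I * (qSeries (fun n ↦ n * eichlerCoeff n) (-1 / v)
        - qSeries (fun n ↦ n * eichlerCoeff n) v)
      = (2 * π * I) ^ 3 / 1440 * (3 * v ^ 2 - 5 - 1 / v ^ 2) := by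
  have hv₀ := ne_zero_of_im_pos hv
  have hPG := hasPolyGrowth_eichlerCoeff
  have hleft := ((hasDerivAt_pow 2 v).mul (((hPG.hasQDerivAt_qSeries (im_neg_one_div_pos hv)).comp v
    (hasDerivAt_neg_one_div hv₀)).const_add a)).sub ((hPG.hasQDerivAt_qSeries hv).const_add a)
  have hright := ((((hasDerivAt_pow 3 v).sub ((hasDerivAt_id v).const_mul 5)).add
    ((hasDerivAt_inv hv₀))).const_mul ((2 * π * I) ^ 3 / 1440))
  have heq := hleft.unique (hright.congr_of_eventuallyEq ?_)
  · simp only [Function.comp_apply] at heq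
    push_cast at heq
    linear_combination (norm := skip) heq
    field_simp
    ring
  · filter_upwards [(isOpen_lt continuous_const Complex.continuous_im).mem_nhds hv] with w hw
    simpa using h w hw

end EichlerIntegral

section ComplexMultiplication

/-- The point of complex multiplication with `2 τ₀² - τ₀ + 2 = 0`, of discriminant `-15`. -/
noncomputable def τ₀ : ℂ := (1 + √15 * I) / 4

lemma sqrt_fifteen_sq : (√15 : ℂ) ^ 2 = 15 := by
  rw [← ofReal_pow, sq_sqrt (by norm_num)]
  norm_num

lemma sqrt_five_sq : (√5 : ℂ) ^ 2 = 5 := by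
  rw [← ofReal_pow, sq_sqrt (by norm_num)]
  norm_num

lemma four_mul_τ₀_sub_one : 4 * τ₀ - 1 = √15 * I := by
  rw [τ₀]
  ring

lemma τ₀_sq : τ₀ ^ 2 = τ₀ / 2 - 1 := by
  rw [τ₀]
  linear_combination I ^ 2 / 16 * sqrt_fifteen_sq + 15 / 16 * I_sq

lemma im_τ₀ : τ₀.im = √15 / 4 := by
  simp [τ₀, Complex.div_ofNat_im]

lemma im_τ₀_pos : 0 < τ₀.im := by
  rw [im_τ₀]
  positivity

lemma lt_im_two_mul_τ₀ : 1.92 < (2 * τ₀).im := by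
  have h : 3.84 < √15 := Real.lt_sqrt_of_sq_lt (by norm_num)
  rw [Complex.mul_im, im_τ₀, Complex.re_ofNat, Complex.im_ofNat]
  linarith

lemma im_two_mul_τ₀_pos : 0 < (2 * τ₀).im := by
  linarith [lt_im_two_mul_τ₀]

lemma neg_one_div_τ₀ : -1 / τ₀ = τ₀ - 1 / 2 := by
  rw [div_eq_iff (ne_zero_of_im_pos im_τ₀_pos)]
  linear_combination -τ₀_sq

lemma τ₀_add_half : τ₀ + 1 / 2 = -1 / τ₀ + 1 := by
  rw [neg_one_div_τ₀]
  ring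

lemma e₂_two_mul_τ₀ : 2 * e₂ (2 * τ₀) = -(e₁ (2 * τ₀) + 3 * β (2 * τ₀)) := by
  rw [β]
  linear_combination e₁_add_e₂_add_e₃ im_two_mul_τ₀_pos

lemma e₃_two_mul_τ₀ : 2 * e₃ (2 * τ₀) = 3 * β (2 * τ₀) - e₁ (2 * τ₀) := by
  rw [β]
  linear_combination e₁_add_e₂_add_e₃ im_two_mul_τ₀_pos

-- `τ₀` and `(2 τ₀ + 1) / 2 = -1 / τ₀ + 1` are equivalent under the modular group.
lemma β_quadratic_two_mul_τ₀ :
    e₁ (2 * τ₀) ^ 2 + 14 * (√15 * I) * (β (2 * τ₀) * e₁ (2 * τ₀)) + 33 * β (2 * τ₀) ^ 2 = 0 := by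
  have h₂ := five_mul_e₂_sq im_two_mul_τ₀_pos
  have h₃ := five_mul_e₃_sq im_two_mul_τ₀_pos
  rw [mul_div_cancel_left₀ _ two_ne_zero] at h₂
  rw [show (2 * τ₀ + 1) / 2 = -1 / τ₀ + 1 by rw [← τ₀_add_half]; ring,
    isLevelOneForm_Q.add_one (im_neg_one_div_pos im_τ₀_pos),
    isLevelOneForm_Q.neg_one_div im_τ₀_pos] at h₃
  have hQ := Q_eq_e₁_β im_two_mul_τ₀_pos
  have he₂ : e₂ (2 * τ₀) = -(e₁ (2 * τ₀) + 3 * β (2 * τ₀)) / 2 := by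
    linear_combination e₂_two_mul_τ₀ / 2
  have he₃ : e₃ (2 * τ₀) = (3 * β (2 * τ₀) - e₁ (2 * τ₀)) / 2 := by
    linear_combination e₃_two_mul_τ₀ / 2
  rw [hQ, he₂] at h₂
  rw [hQ, he₃] at h₃
  generalize e₁ (2 * τ₀) = e, β (2 * τ₀) = b at *
  have hτ₀_pow_four : τ₀ ^ 4 = 3 / 4 - 7 / 8 * τ₀ := by
    linear_combination (τ₀ ^ 2 + τ₀ / 2 - 3 / 4) * τ₀_sq
  have h : (2 + 7 * τ₀) * (e ^ 2 + 33 * b ^ 2) = 30 * (14 - 7 * τ₀) * (b * e) := by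
    linear_combination 32 * (h₃ - τ₀ ^ 4 * h₂)
      + 8 * (e ^ 2 + 30 * b * e + 33 * b ^ 2) * hτ₀_pow_four
  rw [← four_mul_τ₀_sub_one]
  linear_combination (11 / 2 - 7 * τ₀) / 60 * h
    + (49 / 60 * (e ^ 2 + 33 * b ^ 2) + 49 / 2 * (b * e)) * τ₀_sq

/-- The value of `3 β / (2 √-15 e₁)` at `2 τ₀`, a root of `220 x² + 140 x = 1`. -/
noncomputable def ξ : ℂ := (16 * √5 - 35) / 110

lemma ξ_sq : 220 * ξ ^ 2 = 1 - 140 * ξ := by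
  rw [ξ]
  linear_combination 220 * (16 / 110) ^ 2 * sqrt_five_sq

lemma sqrt_fifteen_mul_I_sq : (√15 * I : ℂ) ^ 2 = -15 := by
  linear_combination I ^ 2 * sqrt_fifteen_sq + 15 * I_sq

lemma sqrt_fifteen_mul_I_ne_zero : (√15 * I : ℂ) ≠ 0 := by simp

lemma sqrt_five_sub_one_div_two_pow_four : ((√5 - 1) / 2 : ℂ) ^ 4 = (7 - 3 * √5) / 2 := by
  linear_combination ((√5 : ℂ) ^ 2 - 4 * √5 + 11) / 16 * sqrt_five_sq

lemma sqrt_five_sub_one_div_two_pow_eight : ((√5 - 1) / 2 : ℂ) ^ 8 = (47 - 21 * √5) / 2 := by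
  rw [show 8 = 4 * 2 from rfl, pow_mul, sqrt_five_sub_one_div_two_pow_four]
  linear_combination 9 / 4 * sqrt_five_sq

lemma β_two_mul_τ₀ : β (2 * τ₀) = 2 / 3 * (√15 * I) * ξ * e₁ (2 * τ₀) := by
  set ξ' : ℝ := (16 * √5 + 35) / 110 with hξ'
  have hmul : (β (2 * τ₀) - 2 / 3 * (√15 * I) * ξ * e₁ (2 * τ₀))
      * (β (2 * τ₀) + 2 / 3 * (√15 * I) * ξ' * e₁ (2 * τ₀)) = 0 := by
    rw [hξ', ξ]
    push_cast
    linear_combination β_quadratic_two_mul_τ₀ / 33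
      - 4 / 9 * ((16 * √5) ^ 2 - 35 ^ 2) / 110 ^ 2 * e₁ (2 * τ₀) ^ 2 * sqrt_fifteen_mul_I_sq
      + 20 / 3 * 256 / 110 ^ 2 * e₁ (2 * τ₀) ^ 2 * sqrt_five_sq
  refine sub_eq_zero.mp ((mul_eq_zero.mp hmul).resolve_right fun h ↦ ?_)
  have he := le_norm_e₁ lt_im_two_mul_τ₀
  have hβ := norm_β_le lt_im_two_mul_τ₀
  have hsqrt₅ : 2 ≤ √5 := Real.le_sqrt_of_sq_le (by norm_num)
  have hsqrt₁₅ : 3 ≤ √15 := Real.le_sqrt_of_sq_le (by norm_num)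
  have hξ'_pos : 3 / 5 ≤ ξ' := by
    rw [hξ']
    linarith
  have hnorm : ‖β (2 * τ₀)‖ = 2 / 3 * √15 * ξ' * ‖e₁ (2 * τ₀)‖ := by
    rw [eq_neg_of_add_eq_zero_left h, norm_neg]
    simp [abs_of_nonneg (by linarith : 0 ≤ ξ')]
  nlinarith [mul_le_mul hsqrt₁₅ hξ'_pos (by norm_num) (by positivity)]

lemma P_two_mul_τ₀ :
    P (2 * τ₀) = (1 / 2 + ξ) * e₁ (2 * τ₀) - 6 / (π * I * (√15 * I)) := by
  have hS := P_neg_one_div im_τ₀_pos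
  have he₂ := e₂_two_mul_τ₀
  have he₃ := e₃_two_mul_τ₀
  rw [e₂, mul_div_cancel_left₀ _ two_ne_zero] at he₂
  rw [e₃, e₂, P_add_one, show (2 * τ₀ + 1) / 2 = -1 / τ₀ + 1 by rw [← τ₀_add_half]; ring,
    P_add_one, hS] at he₃
  rw [β_two_mul_τ₀] at he₂ he₃
  have hπ : (π : ℂ) * I ≠ 0 := mul_ne_zero (ofReal_ne_zero.mpr pi_ne_zero) I_ne_zero
  have hδ := sqrt_fifteen_mul_I_ne_zero
  have hδ_sq := sqrt_fifteen_mul_I_sq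
  have hτ := four_mul_τ₀_sub_one
  have hτ₀ := ne_zero_of_im_pos im_τ₀_pos
  generalize e₁ (2 * τ₀) = e, P (2 * τ₀) = p, P τ₀ = p', √15 * I = δ, π * I = w at *
  have hcancel : δ * (6 / (w * δ)) = 6 / w := by field_simp
  refine mul_left_cancel₀ (mul_ne_zero hτ₀ hδ) ?_
  linear_combination he₃ - τ₀ ^ 2 * he₂ - (p - e / 2) * τ₀ * hτ
    + 2 * (p - e / 2 + δ * ξ * e) * τ₀_sq + τ₀ * hcancel

lemma W_two_mul_τ₀ : W (2 * τ₀) = (34 - 140 * ξ) / 33 * e₁ (2 * τ₀) ^ 2 := by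
  rw [W, β_two_mul_τ₀]
  linear_combination -4 / 9 * ξ ^ 2 * e₁ (2 * τ₀) ^ 2 * sqrt_fifteen_mul_I_sq
    + e₁ (2 * τ₀) ^ 2 / 33 * ξ_sq

lemma hauptmodul_two_mul_τ₀ : hauptmodul (2 * τ₀) = ((√5 - 1) / 2) ^ 8 / 64 := by
  rw [hauptmodul, div_eq_iff (W_ne_zero im_two_mul_τ₀_pos), W_two_mul_τ₀, β_two_mul_τ₀,
    sqrt_five_sub_one_div_two_pow_eight]
  have hξ : 1 - 140 * ξ = (47 - 21 * √5) / 128 * (34 - 140 * ξ) := by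
    rw [ξ]
    linear_combination -147 / 44 * sqrt_five_sq
  linear_combination -4 / 9 * ξ ^ 2 * e₁ (2 * τ₀) ^ 2 * sqrt_fifteen_mul_I_sq
    + e₁ (2 * τ₀) ^ 2 / 33 * (ξ_sq + hξ)

lemma qSeries_oddPart_τ₀ {a : ℕ → ℂ} (ha : HasPolyGrowth a) :
    qSeries (oddPart a) τ₀ = (qSeries a τ₀ - qSeries a (-1 / τ₀)) / 2 := by
  rw [qSeries_oddPart ha im_τ₀_pos, τ₀_add_half, qSeries_add_one]

lemma G₁_G₀_two_mul_τ₀ :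
    π * I * (√15 * I) * G₁ (2 * τ₀) - G₀ (2 * τ₀) = (π * I) ^ 3 / 240 := by
  obtain ⟨a, ha⟩ := exists_qSeries_eichlerCoeff_neg_one_div
  have h₁ := qSeries_natCast_mul_eichlerCoeff_neg_one_div ha im_τ₀_pos
  have h₀ := ha τ₀ im_τ₀_pos
  rw [G₁_eq lt_im_two_mul_τ₀, G₀_eq lt_im_two_mul_τ₀, mul_div_cancel_left₀ _ two_ne_zero,
    qSeries_oddPart_τ₀ hasPolyGrowth_eichlerCoeff,
    qSeries_oddPart_τ₀ (hasPolyGrowth_natCast.mul hasPolyGrowth_eichlerCoeff)]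
  have hinv : 1 / τ₀ = 1 / 2 - τ₀ := by linear_combination -neg_one_div_τ₀
  have hinv_sq : 1 / τ₀ ^ 2 = -3 / 4 - τ₀ / 2 := by
    rw [← one_div_pow, hinv]
    linear_combination τ₀_sq
  rw [hinv] at h₀
  rw [hinv_sq] at h₁
  rw [← four_mul_τ₀_sub_one]
  generalize qSeries eichlerCoeff (-1 / τ₀) = u', qSeries eichlerCoeff τ₀ = u,
    qSeries (fun n ↦ n * eichlerCoeff n) τ₀ = w,
    qSeries (fun n ↦ n * eichlerCoeff n) (-1 / τ₀) = w' at *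
  linear_combination -(4 * τ₀ - 1) * h₁ + 4 * h₀ + 4 * (a + u') * τ₀_sq
    - (π * I) ^ 3 / 180 * (8 * τ₀ + 3) * τ₀_sq

lemma ξ_mul_hyperSeries_hauptmodul_two_mul_τ₀ :
    ξ * (hyperSeries 1 (hauptmodul (2 * τ₀))
      + (1 - 2 * ξ) / 12 * hyperSeries 0 (hauptmodul (2 * τ₀)))
      = π ^ 2 * (34 - 140 * ξ) / 79200 := by
  have hπ : (π : ℂ) * I ≠ 0 := mul_ne_zero (ofReal_ne_zero.mpr pi_ne_zero) I_ne_zero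
  have hδ := sqrt_fifteen_mul_I_ne_zero
  have he := e₁_ne_zero lt_im_two_mul_τ₀
  have hW := W_ne_zero im_two_mul_τ₀_pos
  have hw : weightFactor (2 * τ₀) * W (2 * τ₀) = β (2 * τ₀) := div_mul_cancel₀ _ hW
  have hG := G₁_G₀_two_mul_τ₀
  have hP : π * I * (√15 * I) * (6 / (π * I * (√15 * I))) = 6 :=
    mul_div_cancel₀ _ (mul_ne_zero hπ hδ)
  rw [G₁, G₀, P_two_mul_τ₀] at hG
  rw [W_two_mul_τ₀, β_two_mul_τ₀] at hw
  generalize hyperSeries 1 _ = h₁, hyperSeries 0 _ = h₀, weightFactor _ = w, e₁ _ = e at *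
  have hwe : w * e * (34 - 140 * ξ) = 22 * (√15 * I) * ξ :=
    mul_right_cancel₀ he (by linear_combination 33 * hw)
  have hG' : π * I * (√15 * I) * (w * e) * (h₁ + (1 - 2 * ξ) / 12 * h₀) = (π * I) ^ 3 / 240 := by
    linear_combination hG - w * h₀ / 6 * hP
  refine mul_left_cancel₀ hπ ?_
  linear_combination -(34 - 140 * ξ) / 330 * hG'
    + π * I * (√15 * I) / 330 * (h₁ + (1 - 2 * ξ) / 12 * h₀) * hwe
    + π * I * ξ / 15 * (h₁ + (1 - 2 * ξ) / 12 * h₀) * sqrt_fifteen_mul_I_sq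
    - π ^ 3 * I * (34 - 140 * ξ) / 79200 * I_sq

lemma hyperSeries_combination :
    (42 * √5 + 30) / 32 * hyperSeries 1 (((√5 - 1) / 2) ^ 8 / 64)
      + (5 * √5 - 1) / 32 * hyperSeries 0 (((√5 - 1) / 2) ^ 8 / 64)
      = π ^ 2 * (7 + 3 * √5) / 60 := by
  have hξ : ξ ≠ 0 := by
    intro h
    simpa [h] using ξ_sq
  have h := ξ_mul_hyperSeries_hauptmodul_two_mul_τ₀
  rw [hauptmodul_two_mul_τ₀] at h
  refine mul_left_cancel₀ hξ ?_
  generalize hyperSeries 1 _ = h₁, hyperSeries 0 _ = h₀ at *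
  rw [ξ] at *
  linear_combination (42 * √5 + 30) / 32 * h
    + ((14 / 3025 * √5 - 49 / 4840) * h₀ - 221 / 29040 * π ^ 2) * sqrt_five_sq

lemma hasSum_hyperCoeff_mul_linear :
    HasSum (fun n : ℕ ↦ hyperCoeff n * ((42 * √5 + 30) / 32 * n + (26 * √5 + 14) / 32 : ℂ)
      * (((√5 - 1) / 2) ^ 8 / 64) ^ n) (π ^ 2 * (7 + 3 * √5) / 60 : ℂ) := by
  have hz : ‖(((√5 - 1) / 2) ^ 8 / 64 : ℂ)‖ < 1 :=
    hauptmodul_two_mul_τ₀ ▸ norm_hauptmodul_lt_one lt_im_two_mul_τ₀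
  have hsum := ((hasSum_hyperSeries 1 hz).mul_left ((42 * √5 + 30) / 32 : ℂ)).add
    ((hasSum_hyperSeries 0 hz).mul_left ((5 * √5 - 1) / 32 : ℂ))
  rw [hyperSeries_combination] at hsum
  refine hsum.congr_fun fun n ↦ ?_
  ring

end ComplexMultiplication

end RamanujanSeries

theorem stmt_9 :
    ∑' n : ℕ,
        ((ascPochhammer ℝ n).eval (1 : ℝ)) ^ 3 / ((ascPochhammer ℝ n).eval (3 / 2 : ℝ)) ^ 3 *
          ((42 * Real.sqrt 5 + 30) / 32 * (n : ℝ) + (26 * Real.sqrt 5 + 14) / 32) *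
          (1 / (2 : ℝ) ^ (6 * n + 3)) * ((Real.sqrt 5 - 1) / 2) ^ (8 * n + 4) =
      π ^ 2 / 240 := by
  have hsum := RamanujanSeries.hasSum_hyperCoeff_mul_linear.mul_left
    (1 / 8 * ((√5 - 1) / 2) ^ 4 : ℂ)
  have hpow (x : ℂ) (n : ℕ) : (x ^ 8 / 64) ^ n = x ^ (8 * n) / 2 ^ (6 * n) := by
    rw [div_pow, pow_mul, pow_mul]
    norm_num
  refine Complex.ofReal_injective ?_
  rw [Complex.ofReal_tsum]
  refine (tsum_congr fun n ↦ ?_).trans (hsum.tsum_eq.trans ?_)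
  · rw [RamanujanSeries.hyperCoeff, hpow]
    push_cast
    ring
  · rw [RamanujanSeries.sqrt_five_sub_one_div_two_pow_four]
    push_cast
    linear_combination (-3 / 320 * π ^ 2) * RamanujanSeries.sqrt_five_sq
end
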